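/- arXiv:2010.08818 — 3 statements merged into one kernel-verified Lean document; each statement's English description precedes it below -/
import Mathlib

section
/- For α > -1, the kernel K^{(α)}(z,w) = (2 Re z)^{α/2} (2 Re w)^{α/2} ∫₀¹ (t^{α+1}/Γ(α+1)) e^{-t(z+w̄)} dt on the right half-plane satisfies the mass-one equation: ∫_{H₊} |K^{(α)}(z,w)|² dA(w) = K^{(α)}(z,z) for all z with Re z > 0, where dA is Lebesgue measure divided by π. -/
open MeasureTheory Complex

/-- The hard-wall kernel `K^{(α)}(z,w) = (2 Re z)^{α/2} (2 Re w)^{α/2}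
    ∫₀¹ (t^{α+1}/Γ(α+1)) e^{-t(z+conj w)} dt`. -/
noncomputable def hardWallKernel (α : ℝ) (z w : ℂ) : ℂ :=
  (((2 * z.re) ^ (α / 2) * (2 * w.re) ^ (α / 2) : ℝ) : ℂ) *
    ∫ t in Set.Ioc (0 : ℝ) 1,
      ((t ^ (α + 1) / Real.Gamma (α + 1) : ℝ) : ℂ) *
        Complex.exp (-(t : ℂ) * (z + (starRingEnd ℂ) w))


open scoped FourierTransform SchwartzMap in
lemma plancherel_aux (g : ℝ → ℂ) (h1 : Integrable g) (h2 : MemLp g 2) :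
    ∫⁻ ξ, ‖𝓕 g ξ‖ₑ ^ 2 = ∫⁻ t, ‖g t‖ₑ ^ 2 := by
  set f : Lp (α := ℝ) ℂ 2 volume := h2.toLp g with hf
  have hcont : Continuous (𝓕 g) :=
    VectorFourier.fourierIntegral_continuous (μ := volume) (L := innerₗ ℝ)
      Real.continuous_fourierChar (by exact continuous_inner) h1
  have key : ∀ᵐ x ∂(volume : Measure ℝ), (𝓕 f : Lp (α := ℝ) ℂ 2 volume) x = 𝓕 g x := by
    apply ae_eq_of_integral_contDiff_smul_eq
    · exact (Lp.memLp (𝓕 f : Lp (α := ℝ) ℂ 2 volume)).locallyIntegrable (by norm_num)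
    · exact hcont.locallyIntegrable
    · intro φ hφ hφc
      have c1 : ContDiff ℝ (⊤ : ℕ∞) (fun x => (φ x : ℂ)) := Complex.ofRealCLM.contDiff.comp hφ
      have c2 : HasCompactSupport (fun x => (φ x : ℂ)) :=
        hφc.comp_left (g := fun x : ℝ => (x : ℂ)) (by simp)
      set Φ : 𝓢(ℝ, ℂ) := c2.toSchwartzMap c1 with hΦ
      have hΦx : ∀ x, Φ x = (φ x : ℂ) := fun x => rfl
      have e := congrArg (fun T => T Φ) (Lp.fourier_toTemperedDistribution_eq f)
      simp only [TemperedDistribution.fourier_apply, Lp.toTemperedDistribution_apply] at e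
      have e1 : ∫ x, (𝓕 Φ) x • f x = ∫ x, (𝓕 Φ) x • g x := by
        apply integral_congr_ae
        filter_upwards [h2.coeFn_toLp] with x hx
        rw [hf, hx]
      have e2 : ∫ x, (𝓕 Φ) x • g x = ∫ x, Φ x • 𝓕 g x := by
        rw [SchwartzMap.fourier_coe]
        have := VectorFourier.integral_fourierIntegral_smul_eq_flip (L := innerₗ ℝ) (μ := volume) (ν := volume)
          Real.continuous_fourierChar (by exact continuous_inner) Φ.integrable h1
        rw [flip_innerₗ] at this
        exact this
      have e3 : ∀ h : ℝ → ℂ, ∫ x, φ x • h x = ∫ x, Φ x • h x := by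
        intro h
        simp [hΦx]
      rw [e3, e3, ← e, e1, e2]
  have hn := Lp.norm_fourier_eq f
  rw [Lp.norm_def, Lp.norm_def, ENNReal.toReal_eq_toReal_iff' (Lp.eLpNorm_ne_top _) (Lp.eLpNorm_ne_top _),
    eLpNorm_congr_ae key, eLpNorm_congr_ae h2.coeFn_toLp] at hn
  have q : ∀ h : ℝ → ℂ, eLpNorm h 2 volume ^ 2 = ∫⁻ t, ‖h t‖ₑ ^ 2 := by
    intro h
    have := eLpNorm_nnreal_pow_eq_lintegral (f := h) (μ := volume) (p := 2) (by norm_num)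
    simpa using this
  rw [← q, ← q, hn]

lemma plancherel_scaled (g : ℝ → ℂ) (h1 : Integrable g) (h2 : MemLp g 2) :
    ∫⁻ v : ℝ, ‖∫ t, g t * exp (t * v * I)‖ₑ ^ 2 = ENNReal.ofReal (2 * Real.pi) * ∫⁻ t, ‖g t‖ₑ ^ 2 := by
  rw [← plancherel_aux g h1 h2]
  have hpi := Real.pi_pos
  have ha : (-(2 * Real.pi)) ≠ 0 := by linarith
  have hm := Real.smul_map_volume_mul_left ha
  have hl : ∀ F : ℝ → ENNReal, ∫⁻ v, F v =
      ENNReal.ofReal |(-(2 * Real.pi))| * ∫⁻ v, F (-(2 * Real.pi) * v) := by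
    intro F
    conv_lhs => rw [← hm]
    rw [lintegral_smul_measure, smul_eq_mul]
    congr 1
    exact (Homeomorph.mulLeft₀ _ ha).measurableEmbedding.lintegral_map F
  rw [hl]
  congr 1
  · simp [abs_of_pos hpi]
  apply lintegral_congr
  intro ξ
  rw [Real.fourier_eq']
  congr 2
  apply integral_congr_ae
  filter_upwards with t
  simp only [smul_eq_mul, RCLike.inner_apply, conj_trivial]
  rw [mul_comm]
  congr 2
  push_cast
  ring

lemma kernel_measurable (α : ℝ) (z : ℂ) : Measurable (fun w => hardWallKernel α z w) := by
  unfold hardWallKernel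
  apply Measurable.mul
  · fun_prop
  · apply StronglyMeasurable.measurable
    apply StronglyMeasurable.integral_prod_right (f := fun (w : ℂ) (t : ℝ) =>
      ((t ^ (α + 1) / Real.Gamma (α + 1) : ℝ) : ℂ) *
        Complex.exp (-(t : ℂ) * (z + (starRingEnd ℂ) w)))
    apply Measurable.stronglyMeasurable
    simp only [Function.uncurry_def]
    have : Measurable (fun x : ℂ × ℝ => (starRingEnd ℂ) x.1) :=
      (Complex.continuous_conj.comp continuous_fst).measurable
    fun_prop

lemma inner_int (α : ℝ) (hα : -1 < α) (z : ℂ) (hz : 0 < z.re) (u : ℝ) (hu : 0 < u) :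
    ∫⁻ v : ℝ, ‖hardWallKernel α z ⟨u, v⟩‖ₑ ^ 2 =
      ENNReal.ofReal ((2 * z.re) ^ α * (2 * u) ^ α * (2 * Real.pi)) *
      ∫⁻ t in Set.Ioc (0 : ℝ) 1,
        ENNReal.ofReal ((t ^ (α + 1) / Real.Gamma (α + 1)) ^ 2 * Real.exp (-(2 * t * (z.re + u)))) := by
  have hG : 0 < Real.Gamma (α + 1) := Real.Gamma_pos_of_pos (by linarith)
  have hpi := Real.pi_pos
  set g0 : ℝ → ℂ := fun t => ((t ^ (α + 1) / Real.Gamma (α + 1) : ℝ) : ℂ) * exp (-(t : ℂ) * (z + u)) with hg0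
  have hm : Measurable g0 := by fun_prop
  have hn : ∀ t ∈ Set.Ioc (0 : ℝ) 1, ‖g0 t‖ = t ^ (α + 1) / Real.Gamma (α + 1) * Real.exp (-(t * (z.re + u))) := by
    intro t ht
    have h0 : 0 ≤ t ^ (α + 1) := Real.rpow_nonneg ht.1.le _
    simp only [hg0, norm_mul, Complex.norm_exp, Complex.norm_real, Real.norm_eq_abs]
    rw [abs_of_nonneg (by positivity)]
    simp
  have hb : ∀ p, MemLp g0 p (volume.restrict (Set.Ioc (0 : ℝ) 1)) := by
    intro p
    apply MemLp.of_bound hm.aestronglyMeasurable (1 / Real.Gamma (α + 1))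
    filter_upwards [ae_restrict_mem measurableSet_Ioc] with t ht
    rw [hn t ht]
    have h0 : 0 ≤ t ^ (α + 1) := Real.rpow_nonneg ht.1.le _
    have h1 : t ^ (α + 1) ≤ 1 := Real.rpow_le_one ht.1.le ht.2 (by linarith)
    have h2 : Real.exp (-(t * (z.re + u))) ≤ 1 := by
      apply Real.exp_le_one_iff.2
      have := ht.1
      have : 0 < t * (z.re + u) := by positivity
      linarith
    calc _ ≤ 1 / Real.Gamma (α + 1) * 1 := by gcongr
      _ = _ := mul_one _
  have hb' : ∀ p, MemLp ((Set.Ioc (0 : ℝ) 1).indicator g0) p volume := fun p =>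
    (memLp_indicator_iff_restrict measurableSet_Ioc).2 (hb p)
  have P := plancherel_scaled _ (memLp_one_iff_integrable.1 (hb' 1)) (hb' 2)
  have hK : ∀ v : ℝ, ‖hardWallKernel α z ⟨u, v⟩‖ₑ ^ 2 =
      ENNReal.ofReal ((2 * z.re) ^ α * (2 * u) ^ α) *
      ‖∫ t, (Set.Ioc (0 : ℝ) 1).indicator g0 t * exp (t * v * I)‖ₑ ^ 2 := by
    intro v
    have hi : ∫ t, (Set.Ioc (0 : ℝ) 1).indicator g0 t * exp (t * v * I) =
        ∫ t in Set.Ioc (0 : ℝ) 1, ((t ^ (α + 1) / Real.Gamma (α + 1) : ℝ) : ℂ) *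
        Complex.exp (-(t : ℂ) * (z + (starRingEnd ℂ) ⟨u, v⟩)) := by
      rw [← integral_indicator measurableSet_Ioc]
      congr 1
      ext t
      by_cases ht : t ∈ Set.Ioc (0 : ℝ) 1
      · rw [Set.indicator_of_mem ht, Set.indicator_of_mem ht]
        simp only [hg0]
        rw [mul_assoc, ← Complex.exp_add]
        congr 2
        apply Complex.ext <;> simp <;> ring
      · rw [Set.indicator_of_notMem ht, Set.indicator_of_notMem ht, zero_mul]
    rw [hi]
    unfold hardWallKernel
    rw [enorm_mul, mul_pow]
    congr 1
    rw [← ofReal_norm_eq_enorm, Complex.norm_real, Real.norm_eq_abs, abs_of_nonneg (by positivity),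
      ← ENNReal.ofReal_pow (by positivity), mul_pow]
    congr 2 <;> rw [← Real.rpow_natCast, ← Real.rpow_mul (by positivity)] <;> simp
  simp_rw [hK]
  rw [lintegral_const_mul' _ _ ENNReal.ofReal_ne_top, P, ← mul_assoc, ← ENNReal.ofReal_mul (by positivity)]
  congr 1
  rw [← lintegral_indicator measurableSet_Ioc]
  apply lintegral_congr
  intro t
  by_cases ht : t ∈ Set.Ioc (0 : ℝ) 1
  · rw [Set.indicator_of_mem ht, Set.indicator_of_mem ht, ← ofReal_norm_eq_enorm,
      ← ENNReal.ofReal_pow (by positivity), hn t ht, mul_pow, ← Real.exp_nat_mul]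
    congr 3
    push_cast
    ring
  · rw [Set.indicator_of_notMem ht, Set.indicator_of_notMem ht]
    simp

lemma gamma_int (α : ℝ) (hα : -1 < α) (t : ℝ) (ht : 0 < t) :
    ∫⁻ u in Set.Ioi (0 : ℝ), ENNReal.ofReal ((2 * u) ^ α * Real.exp (-(2 * t * u))) =
      ENNReal.ofReal (Real.Gamma (α + 1) / (2 * t ^ (α + 1))) := by
  have h := Real.integral_rpow_mul_exp_neg_mul_Ioi (a := α + 1) (r := 2 * t) (by linarith) (by positivity)
  have hG : 0 < Real.Gamma (α + 1) := Real.Gamma_pos_of_pos (by linarith)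
  have hv : ∫ u in Set.Ioi (0 : ℝ), (2 * u) ^ α * Real.exp (-(2 * t * u)) =
      Real.Gamma (α + 1) / (2 * t ^ (α + 1)) := by
    have : ∀ u ∈ Set.Ioi (0 : ℝ), (2 * u) ^ α * Real.exp (-(2 * t * u)) =
       2 ^ α * (u ^ (α + 1 - 1) * Real.exp (-(2 * t * u))) := by
      intro u hu
      rw [Real.mul_rpow (by norm_num) (le_of_lt hu), add_sub_cancel_right, mul_assoc]
    rw [setIntegral_congr_fun measurableSet_Ioi this, integral_const_mul, h,
      Real.div_rpow (by norm_num) (by positivity), Real.mul_rpow (by norm_num) ht.le, Real.one_rpow,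
      Real.rpow_add_one (by norm_num) α]
    have : (2 : ℝ) ^ α ≠ 0 := by positivity
    have : t ^ (α + 1) ≠ 0 := by positivity
    field_simp
  rw [← hv, ofReal_integral_eq_lintegral_ofReal]
  · apply Integrable.of_integral_ne_zero
    rw [hv]
    positivity
  · filter_upwards [ae_restrict_mem measurableSet_Ioi] with u hu
    have : 0 < u := hu
    positivity

/-- Mass-one equation for the hard-wall kernel: for every `z` in the right half plane,
    `∫_{H₊} |K^{(α)}(z,w)|² dA(w) = K^{(α)}(z,z)` where `dA` is Lebesgue measure divided by π. -/
theorem hardWallKernel_mass_one (α : ℝ) (hα : -1 < α) (z : ℂ) (hz : 0 < z.re) :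
    (((1 / Real.pi) * ∫ w in {w : ℂ | 0 < w.re}, ‖hardWallKernel α z w‖ ^ 2 : ℝ) : ℂ)
      = hardWallKernel α z z := by
  have hG : 0 < Real.Gamma (α + 1) := Real.Gamma_pos_of_pos (by linarith)
  have hpi := Real.pi_pos
  have hmeas := kernel_measurable α z
  -- the diagonal value
  set k : ℝ → ℝ := fun t => t ^ (α + 1) / Real.Gamma (α + 1) * Real.exp (-(2 * t * z.re)) with hk
  have hk0 : ∀ t ∈ Set.Ioc (0 : ℝ) 1, 0 ≤ k t := by
    intro t ht
    have := ht.1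
    simp only [hk]
    positivity
  have hkm : Measurable k := by fun_prop
  have hkint : IntegrableOn k (Set.Ioc (0 : ℝ) 1) := by
    rw [IntegrableOn, ← memLp_one_iff_integrable]
    apply MemLp.of_bound hkm.aestronglyMeasurable (1 / Real.Gamma (α + 1))
    filter_upwards [ae_restrict_mem measurableSet_Ioc] with t ht
    rw [Real.norm_of_nonneg (hk0 t ht)]
    have h0 : 0 ≤ t ^ (α + 1) := Real.rpow_nonneg ht.1.le _
    have h1 : t ^ (α + 1) ≤ 1 := Real.rpow_le_one ht.1.le ht.2 (by linarith)
    have h2 : Real.exp (-(2 * t * z.re)) ≤ 1 := by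
      apply Real.exp_le_one_iff.2
      have := ht.1
      have : 0 < 2 * t * z.re := by positivity
      linarith
    calc _ ≤ 1 / Real.Gamma (α + 1) * 1 := by simp only [hk]; gcongr
      _ = _ := mul_one _
  have hdiag : hardWallKernel α z z = (((2 * z.re) ^ α * ∫ t in Set.Ioc (0 : ℝ) 1, k t : ℝ) : ℂ) := by
    unfold hardWallKernel
    rw [← Real.rpow_add (by positivity), add_halves, ofReal_mul, ← integral_complex_ofReal]
    congr 2
    ext t
    simp only [hk]
    rw [Complex.add_conj]
    push_cast
    congr 2
    ring
  rw [hdiag]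
  congr 1
  have hS : MeasurableSet {w : ℂ | 0 < w.re} := measurableSet_lt measurable_const Complex.measurable_re
  have hl : ∫⁻ w in {w : ℂ | 0 < w.re}, ‖hardWallKernel α z w‖ₑ ^ 2 =
      ENNReal.ofReal (Real.pi * ((2 * z.re) ^ α * ∫ t in Set.Ioc (0 : ℝ) 1, k t)) := by
    have hF : Measurable (fun w => ‖hardWallKernel α z w‖ₑ ^ 2) := by fun_prop
    calc _ = ∫⁻ w, ({w : ℂ | 0 < w.re}.indicator fun w => ‖hardWallKernel α z w‖ₑ ^ 2) w :=
          (lintegral_indicator hS _).symm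
      _ = ∫⁻ p : ℝ × ℝ, ({w : ℂ | 0 < w.re}.indicator fun w => ‖hardWallKernel α z w‖ₑ ^ 2)
            (Complex.measurableEquivRealProd.symm p) :=
          ((Complex.volume_preserving_equiv_real_prod.symm).lintegral_comp (hF.indicator hS)).symm
      _ = ∫⁻ u : ℝ, ∫⁻ v : ℝ, ({w : ℂ | 0 < w.re}.indicator fun w => ‖hardWallKernel α z w‖ₑ ^ 2)
            (Complex.measurableEquivRealProd.symm (u, v)) := by
          rw [Measure.volume_eq_prod, lintegral_prod]
          exact ((hF.indicator hS).comp Complex.measurableEquivRealProd.symm.measurable).aemeasurable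
      _ = ∫⁻ u in Set.Ioi (0 : ℝ), ∫⁻ v : ℝ, ‖hardWallKernel α z ⟨u, v⟩‖ₑ ^ 2 := by
          rw [← lintegral_indicator measurableSet_Ioi]
          apply lintegral_congr
          intro u
          by_cases hu : 0 < u
          · rw [Set.indicator_of_mem (by exact hu)]
            apply lintegral_congr
            intro v
            rw [Set.indicator_of_mem (by exact hu)]
            rfl
          · rw [Set.indicator_of_notMem (by exact hu)]
            rw [← lintegral_zero (μ := (volume : Measure ℝ))]
            apply lintegral_congr
            intro v
            rw [Set.indicator_of_notMem (by exact hu)]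
      _ = ∫⁻ u in Set.Ioi (0 : ℝ), ∫⁻ t in Set.Ioc (0 : ℝ) 1,
            ENNReal.ofReal ((2 * z.re) ^ α * (2 * u) ^ α * (2 * Real.pi) *
            ((t ^ (α + 1) / Real.Gamma (α + 1)) ^ 2 * Real.exp (-(2 * t * (z.re + u))))) := by
          apply setLIntegral_congr_fun measurableSet_Ioi
          intro u hu
          have hu' : 0 < u := hu
          simp only
          rw [inner_int α hα z hz u hu, ← lintegral_const_mul' _ _ ENNReal.ofReal_ne_top]
          apply lintegral_congr
          intro t
          rw [← ENNReal.ofReal_mul (by positivity)]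
      _ = ∫⁻ t in Set.Ioc (0 : ℝ) 1, ∫⁻ u in Set.Ioi (0 : ℝ),
            ENNReal.ofReal ((2 * z.re) ^ α * (2 * u) ^ α * (2 * Real.pi) *
            ((t ^ (α + 1) / Real.Gamma (α + 1)) ^ 2 * Real.exp (-(2 * t * (z.re + u))))) := by
          apply lintegral_lintegral_swap
          apply Measurable.aemeasurable
          simp only [Function.uncurry_def]
          fun_prop
      _ = ∫⁻ t in Set.Ioc (0 : ℝ) 1, ENNReal.ofReal (Real.pi * (2 * z.re) ^ α * k t) := by
          apply setLIntegral_congr_fun measurableSet_Ioc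
          intro t ht
          have ht' : 0 < t := ht.1
          have htp : 0 < t ^ (α + 1) := Real.rpow_pos_of_pos ht' _
          simp only
          have : ∀ u : ℝ, ENNReal.ofReal ((2 * z.re) ^ α * (2 * u) ^ α * (2 * Real.pi) *
            ((t ^ (α + 1) / Real.Gamma (α + 1)) ^ 2 * Real.exp (-(2 * t * (z.re + u))))) =
            ENNReal.ofReal ((2 * z.re) ^ α * (2 * Real.pi) * (t ^ (α + 1) / Real.Gamma (α + 1)) ^ 2
              * Real.exp (-(2 * t * z.re))) * ENNReal.ofReal ((2 * u) ^ α * Real.exp (-(2 * t * u))) := by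
            intro u
            rw [← ENNReal.ofReal_mul (by positivity), mul_add, neg_add, Real.exp_add]
            congr 1
            ring
          simp_rw [this]
          rw [lintegral_const_mul' _ _ ENNReal.ofReal_ne_top, gamma_int α hα t ht',
            ← ENNReal.ofReal_mul (by positivity)]
          congr 1
          simp only [hk]
          field_simp
      _ = _ := by
          rw [← mul_assoc, ← integral_const_mul, ofReal_integral_eq_lintegral_ofReal]
          · exact hkint.const_mul _
          · filter_upwards [ae_restrict_mem measurableSet_Ioc] with t ht
            have := hk0 t ht
            simp only [Pi.zero_apply]
            positivity
  have hk1 : 0 ≤ ∫ t in Set.Ioc (0 : ℝ) 1, k t := setIntegral_nonneg measurableSet_Ioc hk0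
  rw [integral_eq_lintegral_of_nonneg_ae (by filter_upwards with w; positivity)
    (by exact (hmeas.norm.pow_const 2).aestronglyMeasurable)]
  have : ∀ w, ENNReal.ofReal (‖hardWallKernel α z w‖ ^ 2) = ‖hardWallKernel α z w‖ₑ ^ 2 := by
    intro w
    rw [ENNReal.ofReal_pow (by positivity), ofReal_norm_eq_enorm]
  simp_rw [this]
  rw [hl, ENNReal.toReal_ofReal (by positivity)]
  field_simp
end

section
/- Let α > -1 and f : (0,∞) → ℝ Borel measurable with suitable integrability. The mass-one equation ∫_{H₊} |K_f(z,w)|² dA(w) = K_f(z,z) holds for all z ∈ H₊ if and only if f(s) = Γ(α+1)^{-1} s^{α+1} · 1_E(s) for almost every s > 0, for some Borel set E ⊆ (0,∞). -/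
open MeasureTheory Complex

/-- The Laplace-type kernel `K_f(z,w) = (2 Re z)^{α/2}(2 Re w)^{α/2}
    ∫₀^∞ f(t) e^{-t(z + conj w)} dt`. -/
noncomputable def laplaceKernel (α : ℝ) (f : ℝ → ℝ) (z w : ℂ) : ℂ :=
  (((2 * z.re) ^ (α / 2) * (2 * w.re) ^ (α / 2) : ℝ) : ℂ) *
    ∫ t in Set.Ioi (0 : ℝ),
      ((f t : ℝ) : ℂ) * Complex.exp (-(t : ℂ) * (z + (starRingEnd ℂ) w))


open FourierTransform SchwartzMap in
lemma planch_aux (g : ℝ → ℂ) (hg : Integrable g) (hG : MemLp (𝓕 g) 2) :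
    Integrable (fun t => ‖g t‖ ^ 2) ∧ ∫ t, ‖𝓕 g t‖ ^ 2 = ∫ t, ‖g t‖ ^ 2 := by
  set G : Lp ℂ 2 (volume : Measure ℝ) := hG.toLp _ with hGdef
  set h : Lp ℂ 2 (volume : Measure ℝ) := 𝓕⁻ G with hh
  have key : ∀ φ : 𝓢(ℝ, ℂ), ∫ x, φ x • h x = ∫ x, φ x • g x := by
    intro φ
    have h1 := congrArg (fun T => T φ) (MeasureTheory.Lp.fourierInv_toTemperedDistribution_eq G)
    simp only [TemperedDistribution.fourierInv_apply, Lp.toTemperedDistribution_apply] at h1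
    rw [← hh] at h1
    rw [← h1]
    have h2 : ∫ x, (𝓕⁻ φ) x • G x = ∫ x, (𝓕⁻ φ) x • 𝓕 g x := by
      apply integral_congr_ae
      filter_upwards [hG.coeFn_toLp] with x hx
      rw [hGdef, hx]
    rw [h2]
    have h3 := VectorFourier.integral_fourierIntegral_smul_eq_flip (L := innerₗ ℝ)
      (μ := volume) (ν := volume) (f := (𝓕⁻ φ : 𝓢(ℝ, ℂ))) (g := g)
      Real.continuous_fourierChar continuous_inner (𝓕⁻ φ).integrable hg
    have h4 : (VectorFourier.fourierIntegral Real.fourierChar volume (innerₗ ℝ)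
        ((𝓕⁻ φ : 𝓢(ℝ, ℂ)) : ℝ → ℂ)) = φ := by
      have : 𝓕 ((𝓕⁻ φ : 𝓢(ℝ, ℂ)) : ℝ → ℂ) = φ := by
        rw [← SchwartzMap.fourier_coe, FourierTransform.fourier_fourierInv_eq]
      exact this
    rw [h4, flip_innerₗ] at h3
    exact h3.symm
  have hae : ∀ᵐ x, h x = g x := by
    apply ae_eq_of_integral_contDiff_smul_eq
      ((Lp.memLp h).locallyIntegrable (by norm_num)) hg.locallyIntegrable
    intro φ hφ hc
    have hg₁ : HasCompactSupport (Complex.ofRealCLM ∘ φ) := hc.comp_left rfl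
    have hg₂ : ContDiff ℝ (↑(⊤ : ℕ∞)) (Complex.ofRealCLM ∘ φ) := by fun_prop
    simpa using key (hg₁.toSchwartzMap hg₂)
  have hnorm : ∀ k : Lp ℂ 2 (volume : Measure ℝ), ‖k‖ ^ 2 = ∫ t, ‖k t‖ ^ 2 := by
    intro k
    have := @MeasureTheory.L2.inner_def ℝ ℂ ℂ _ _ _ _ _ k k
    have h5 : ((‖k‖ ^ 2 : ℝ) : ℂ) = ((∫ t, ‖k t‖ ^ 2 : ℝ) : ℂ) := by
      rw [← integral_complex_ofReal]
      simp only [inner_self_eq_norm_sq_to_K] at this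
      push_cast
      exact this
    exact_mod_cast h5
  have hn : ‖G‖ = ‖h‖ := by
    rw [← Lp.norm_fourier_eq h, hh, FourierTransform.fourier_fourierInv_eq]
  constructor
  · have := (memLp_two_iff_integrable_sq_norm (Lp.aestronglyMeasurable h)).1 (Lp.memLp h)
    refine this.congr ?_
    filter_upwards [hae] with x hx
    rw [hx]
  · have e1 := hnorm G
    rw [hn, hnorm h] at e1
    rw [integral_congr_ae (g := fun t => ‖h t‖ ^ 2) (f := fun t => ‖g t‖ ^ 2), e1]
    · apply integral_congr_ae
      filter_upwards [hG.coeFn_toLp] with x hx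
      rw [hGdef, hx]
    · filter_upwards [hae] with x hx
      rw [hx]

lemma laplace_diff (h : ℝ → ℝ) (hm : Measurable h)
    (hint : ∀ x : ℝ, 0 < x →
      IntegrableOn (fun t => h t * Real.exp (-(t * x))) (Set.Ioi 0)) :
    DifferentiableOn ℂ (fun z : ℂ => ∫ t in Set.Ioi (0 : ℝ), (h t : ℂ) * cexp (-(t : ℂ) * z))
      {z : ℂ | 0 < z.re} := by
  intro z hz
  simp only [Set.mem_ofPred_eq] at hz
  have hs : {w : ℂ | z.re / 2 < w.re} ∈ nhds z :=
    (isOpen_lt continuous_const Complex.continuous_re).mem_nhds (by simp; linarith)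
  have hn : ∀ (w : ℂ) (t : ℝ), ‖(h t : ℂ) * cexp (-(t : ℂ) * w)‖ = |h t| * Real.exp (-(t * w.re)) := by
    intro w t
    rw [norm_mul, Complex.norm_exp]; simp
  have hI : IntegrableOn (fun t : ℝ => (h t : ℂ) * cexp (-(t : ℂ) * z)) (Set.Ioi 0) := by
    refine Integrable.mono (hint z.re hz) (by fun_prop) (Filter.Eventually.of_forall fun t => ?_)
    rw [hn]; simp
  refine ((hasDerivAt_integral_of_dominated_loc_of_deriv_le (μ := volume.restrict (Set.Ioi 0))
    (F := fun z t => (h t : ℂ) * cexp (-(t : ℂ) * z))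
    (F' := fun z t => (h t : ℂ) * (cexp (-(t : ℂ) * z) * (-(t : ℂ))))
    (bound := fun t => (4 / z.re) * |h t * Real.exp (-(t * (z.re / 4)))|)
    hs (Filter.Eventually.of_forall fun w => by fun_prop) hI (by fun_prop) ?_ ?_ ?_).2).differentiableAt.differentiableWithinAt
  · filter_upwards [ae_restrict_mem measurableSet_Ioi] with t ht w hw
    simp only [Set.mem_Ioi] at ht hw
    rw [← mul_assoc, norm_mul, hn, abs_mul, Real.abs_exp, norm_neg, Complex.norm_real, Real.norm_eq_abs, abs_of_pos ht]
    have h1 : Real.exp (-(t * w.re)) ≤ Real.exp (-(t * (z.re/2))) := by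
      apply Real.exp_le_exp.2; nlinarith
    have h2 : t * z.re / 4 ≤ Real.exp (t * (z.re/4)) := by
      have := Real.add_one_le_exp (t * (z.re/4)); linarith
    have h3 : t ≤ 4 / z.re * Real.exp (t * (z.re/4)) := by
      rw [div_mul_eq_mul_div, le_div_iff₀ hz]; linarith
    have h4 : Real.exp (-(t * (z.re/2))) * Real.exp (t * (z.re/4)) = Real.exp (-(t * (z.re/4))) := by
      rw [← Real.exp_add]; congr 1; ring
    calc |h t| * Real.exp (-(t * w.re)) * t ≤ |h t| * Real.exp (-(t * (z.re/2))) * (4 / z.re * Real.exp (t * (z.re/4))) := by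
          gcongr
      _ = _ := by rw [← h4]; ring
  · exact ((hint (z.re/4) (by positivity)).abs).const_mul _
  · refine Filter.Eventually.of_forall fun t w _ => ?_
    have : HasDerivAt (fun w : ℂ => -(t : ℂ) * w) (-(t : ℂ)) w := by
      simpa using (hasDerivAt_id w).const_mul (-(t : ℂ))
    exact (this.cexp).const_mul _

open FourierTransform in
lemma laplace_unique (h : ℝ → ℝ) (hm : Measurable h)
    (hint : ∀ x : ℝ, 0 < x →
      IntegrableOn (fun t => h t * Real.exp (-(t * x))) (Set.Ioi 0))
    (h0 : ∀ x : ℝ, 0 < x → ∫ t in Set.Ioi (0 : ℝ), h t * Real.exp (-(t * x)) = 0) :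
    ∀ᵐ t ∂(volume.restrict (Set.Ioi (0 : ℝ))), h t = 0 := by
  set L := fun z : ℂ => ∫ t in Set.Ioi (0 : ℝ), (h t : ℂ) * cexp (-(t : ℂ) * z) with hL
  have hopen : IsOpen {z : ℂ | 0 < z.re} := isOpen_lt continuous_const Complex.continuous_re
  have han : AnalyticOnNhd ℂ L {z : ℂ | 0 < z.re} := (laplace_diff h hm hint).analyticOnNhd hopen
  have hpre : IsPreconnected {z : ℂ | 0 < z.re} := (convex_halfSpace_re_gt 0).isPreconnected
  have hr : ∀ x : ℝ, 0 < x → L x = 0 := by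
    intro x hx
    have := congrArg (fun r : ℝ => (r : ℂ)) (h0 x hx)
    simp only [← integral_complex_ofReal] at this
    rw [hL]
    simp only
    push_cast at this
    rw [← this]
    congr 1; ext t; congr 2; ring
  have hfreq : ∃ᶠ z in nhdsWithin (1 : ℂ) {1}ᶜ, L z = 0 := by
    have ht : Filter.Tendsto (fun x : ℝ => (x : ℂ)) (nhdsWithin 1 {1}ᶜ) (nhdsWithin (1 : ℂ) {1}ᶜ) := by
      refine tendsto_nhdsWithin_iff.2 ⟨?_, ?_⟩
      · have : Filter.Tendsto (fun x : ℝ => (x : ℂ)) (nhds 1) (nhds ((1 : ℝ) : ℂ)) :=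
          Complex.continuous_ofReal.tendsto 1
        simpa using this.mono_left nhdsWithin_le_nhds
      · filter_upwards [self_mem_nhdsWithin] with x hx
        simpa using hx
    refine ht.frequently ?_
    refine Filter.Eventually.frequently ?_
    filter_upwards [nhdsWithin_le_nhds (lt_mem_nhds (show (0 : ℝ) < 1 by norm_num))] with x hx
    exact hr x hx
  have hz := han.eqOn_zero_of_preconnected_of_frequently_eq_zero hpre (z₀ := 1) (by simp) hfreq
  set g : ℝ → ℂ := (Set.Ioi (0 : ℝ)).indicator (fun t => (h t : ℂ) * cexp (-(t : ℂ))) with hg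
  have hgi : Integrable g := by
    rw [hg, integrable_indicator_iff measurableSet_Ioi]
    refine Integrable.mono (hint 1 one_pos) (by fun_prop) (Filter.Eventually.of_forall fun t => ?_)
    rw [norm_mul, norm_mul, Complex.norm_exp]; simp
  have hF : 𝓕 g = 0 := by
    ext v
    rw [Real.fourier_real_eq_integral_exp_smul]
    have := hz (x := 1 + 2 * Real.pi * v * I) (by simp)
    simp only [Pi.zero_apply] at this ⊢
    rw [← this, hL]
    simp only
    rw [← integral_indicator measurableSet_Ioi]
    congr 1; ext t
    by_cases ht : t ∈ Set.Ioi (0 : ℝ)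
    · simp only [hg, Set.indicator_of_mem ht, smul_eq_mul]
      rw [mul_left_comm, ← Complex.exp_add]
      congr 2; push_cast; ring
    · simp only [hg, Set.indicator_of_notMem ht, smul_zero]
  obtain ⟨hi, he⟩ := planch_aux g hgi (by rw [hF]; exact MemLp.zero)
  rw [hF] at he
  simp only [Pi.zero_apply, norm_zero] at he
  have he' : ∫ t, ‖g t‖ ^ 2 = 0 := by rw [← he]; simp
  rw [integral_eq_zero_iff_of_nonneg (fun t => by positivity) hi] at he'
  rw [ae_restrict_iff' measurableSet_Ioi]
  filter_upwards [he'] with t ht hmem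
  simp only [hg, Set.indicator_of_mem hmem, Pi.zero_apply] at ht
  simpa using ht

open FourierTransform in
/-- Plancherel on a vertical line. -/
lemma line_planch (f : ℝ → ℝ) (hf : Measurable f) (x y u : ℝ)
    (hint : IntegrableOn (fun t => f t * Real.exp (-(t * (x + u)))) (Set.Ioi 0))
    (hv : Integrable (fun v : ℝ => ‖∫ t in Set.Ioi (0 : ℝ),
      ((f t : ℝ) : ℂ) * cexp (-(t : ℂ) * ((x + y * I : ℂ) + (starRingEnd ℂ) (u + v * I)))‖ ^ 2)) :
    IntegrableOn (fun t => f t ^ 2 * Real.exp (-(2 * t * (x + u)))) (Set.Ioi 0) ∧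
    ∫ v : ℝ, ‖∫ t in Set.Ioi (0 : ℝ),
      ((f t : ℝ) : ℂ) * cexp (-(t : ℂ) * ((x + y * I : ℂ) + (starRingEnd ℂ) (u + v * I)))‖ ^ 2
      = 2 * Real.pi * ∫ t in Set.Ioi (0 : ℝ), f t ^ 2 * Real.exp (-(2 * t * (x + u))) := by
  set g : ℝ → ℂ := (Set.Ioi (0 : ℝ)).indicator
    (fun t => (f t : ℂ) * cexp (-(t : ℂ) * (x + u + y * I))) with hg
  have hn : ∀ t : ℝ, ‖(f t : ℂ) * cexp (-(t : ℂ) * (x + u + y * I))‖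
      = |f t| * Real.exp (-(t * (x + u))) := by
    intro t; rw [norm_mul, Complex.norm_exp]; simp
  have hgi : Integrable g := by
    rw [hg, integrable_indicator_iff measurableSet_Ioi]
    refine Integrable.mono hint (by fun_prop) (Filter.Eventually.of_forall fun t => ?_)
    rw [hn]; simp
  set Φ : ℝ → ℂ := fun v => ∫ t in Set.Ioi (0 : ℝ),
      ((f t : ℝ) : ℂ) * cexp (-(t : ℂ) * ((x + y * I : ℂ) + (starRingEnd ℂ) (u + v * I))) with hΦ
  have hF : ∀ v : ℝ, 𝓕 g v = Φ (-(2 * Real.pi) * v) := by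
    intro v
    rw [Real.fourier_real_eq_integral_exp_smul, hΦ]
    simp only
    rw [← integral_indicator measurableSet_Ioi]
    congr 1; ext t
    by_cases ht : t ∈ Set.Ioi (0 : ℝ)
    · simp only [hg, Set.indicator_of_mem ht, smul_eq_mul]
      rw [mul_left_comm, ← Complex.exp_add]
      congr 2
      simp only [map_add, map_mul, Complex.conj_ofReal, Complex.conj_I]
      push_cast; ring
    · simp only [hg, Set.indicator_of_notMem ht, smul_zero]
  have hc : Continuous (𝓕 g) :=
    VectorFourier.fourierIntegral_continuous Real.continuous_fourierChar
      (L := innerₗ ℝ) continuous_inner hgi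
  have h2 : Integrable (fun v => ‖𝓕 g v‖ ^ 2) := by
    simp only [hF]
    exact Integrable.comp_mul_left' hv (by simp [Real.pi_ne_zero])
  obtain ⟨hi, he⟩ := planch_aux g hgi
    ((memLp_two_iff_integrable_sq_norm hc.aestronglyMeasurable).2 h2)
  have hsq : (fun t => ‖g t‖ ^ 2) = (Set.Ioi (0 : ℝ)).indicator
      (fun t => f t ^ 2 * Real.exp (-(2 * t * (x + u)))) := by
    ext t
    by_cases ht : t ∈ Set.Ioi (0 : ℝ)
    · simp only [hg, Set.indicator_of_mem ht]
      rw [hn, mul_pow, sq_abs, ← Real.exp_nat_mul]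
      congr 2; push_cast; ring
    · simp [hg, Set.indicator_of_notMem ht]
  rw [hsq] at hi he
  rw [integrable_indicator_iff measurableSet_Ioi] at hi
  refine ⟨hi, ?_⟩
  rw [integral_indicator measurableSet_Ioi] at he
  rw [← he]
  simp only [hF]
  rw [Measure.integral_comp_mul_left (fun v => ‖Φ v‖ ^ 2)]
  rw [abs_inv, abs_neg, abs_of_pos (by positivity), smul_eq_mul]
  rw [mul_inv_cancel_left₀ (by positivity)]

lemma gamma_inner (α : ℝ) (hα : -1 < α) (t : ℝ) (ht : 0 < t) :
    ∫ u in Set.Ioi (0 : ℝ), (2 * u) ^ α * Real.exp (-(2 * t * u))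
      = 1 / 2 * (Real.Gamma (α + 1) * t ^ (-(α + 1))) := by
  have h := Real.integral_rpow_mul_exp_neg_mul_Ioi (a := α + 1) (r := 2 * t)
    (by linarith) (by positivity)
  have e : ∫ u in Set.Ioi (0 : ℝ), (2 * u) ^ α * Real.exp (-(2 * t * u))
      = ∫ u in Set.Ioi (0 : ℝ), 2 ^ α * (u ^ (α + 1 - 1) * Real.exp (-(2 * t * u))) := by
    apply setIntegral_congr_fun measurableSet_Ioi
    intro u hu
    simp only
    rw [Real.mul_rpow (by norm_num) (le_of_lt hu)]
    simp only [add_sub_cancel_right]; ring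
  rw [e, integral_const_mul, h, one_div, Real.inv_rpow (by positivity),
    ← Real.rpow_neg (by positivity), Real.mul_rpow (by norm_num) ht.le, Real.rpow_neg (by norm_num),
    Real.rpow_add_one (by norm_num)]
  have : (2 : ℝ) ^ α ≠ 0 := by positivity
  field_simp

lemma mass_formula (α : ℝ) (hα : -1 < α) (f : ℝ → ℝ) (hf : Measurable f)
    (hint : ∀ x : ℝ, 0 < x →
      IntegrableOn (fun t => f t * Real.exp (-(t * x))) (Set.Ioi 0))
    (z : ℂ) (hz : 0 < z.re)
    (hsq : IntegrableOn (fun w => ‖laplaceKernel α f z w‖ ^ 2) {w : ℂ | 0 < w.re}) :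
    IntegrableOn (fun t => Real.Gamma (α + 1) * t ^ (-(α + 1)) * f t ^ 2 *
      Real.exp (-(t * (2 * z.re)))) (Set.Ioi 0) ∧
    (1 / Real.pi) * ∫ w in {w : ℂ | 0 < w.re}, ‖laplaceKernel α f z w‖ ^ 2
      = (2 * z.re) ^ α * ∫ t in Set.Ioi (0 : ℝ), Real.Gamma (α + 1) * t ^ (-(α + 1)) * f t ^ 2 *
      Real.exp (-(t * (2 * z.re))) := by
  set x := z.re with hx
  set Φ : ℝ → ℝ → ℂ := fun u v => ∫ t in Set.Ioi (0 : ℝ),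
      ((f t : ℝ) : ℂ) * cexp (-(t : ℂ) * ((x + z.im * I : ℂ) + (starRingEnd ℂ) (u + v * I)))
    with hΦ
  have hxα : 0 < (2 * x) ^ α := by positivity
  -- pass to the product
  have hmp := (Complex.volume_preserving_equiv_real_prod.symm)
  have hme := measurableEquivRealProd.symm.measurableEmbedding
  have hpre : measurableEquivRealProd.symm ⁻¹' {w : ℂ | 0 < w.re}
      = Set.Ioi (0 : ℝ) ×ˢ (Set.univ : Set ℝ) := by
    ext p; simp [Complex.measurableEquivRealProd_symm_apply]
  have hK : ∀ p ∈ Set.Ioi (0 : ℝ) ×ˢ (Set.univ : Set ℝ),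
      ‖laplaceKernel α f z (measurableEquivRealProd.symm p)‖ ^ 2
        = (2 * x) ^ α * ((2 * p.1) ^ α * ‖Φ p.1 p.2‖ ^ 2) := by
    rintro ⟨u, v⟩ hp
    have hu : 0 < u := by simpa using hp
    rw [Complex.measurableEquivRealProd_symm_apply]
    have hzz : (x : ℂ) + z.im * I = z := by rw [hx]; exact Complex.re_add_im z
    have hww : (⟨u, v⟩ : ℂ) = u + v * I := by rw [Complex.mk_eq_add_mul_I]
    simp only [laplaceKernel, hΦ, hzz, hww]
    rw [norm_mul, mul_pow, Complex.norm_real, Real.norm_eq_abs, sq_abs, mul_pow]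
    have e1 : ∀ r : ℝ, 0 < r → (r ^ (α / 2)) ^ 2 = r ^ α := by
      intro r hr
      rw [← Real.rpow_natCast, ← Real.rpow_mul hr.le]; congr 1; push_cast; ring
    rw [← hx, e1 _ (by positivity)]
    rw [e1 _ (by positivity), mul_assoc]
  have hmeas : MeasurableSet (Set.Ioi (0 : ℝ) ×ˢ (Set.univ : Set ℝ)) :=
    measurableSet_Ioi.prod MeasurableSet.univ
  have hrestr : (volume : Measure (ℝ × ℝ)).restrict (Set.Ioi (0 : ℝ) ×ˢ (Set.univ : Set ℝ))
      = (volume.restrict (Set.Ioi (0 : ℝ))).prod volume := by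
    rw [Measure.volume_eq_prod, ← Measure.prod_restrict, Measure.restrict_univ]
  have hI1 : Integrable (fun p : ℝ × ℝ => (2 * x) ^ α * ((2 * p.1) ^ α * ‖Φ p.1 p.2‖ ^ 2))
      ((volume.restrict (Set.Ioi (0 : ℝ))).prod volume) := by
    have h1 := (hmp.integrableOn_comp_preimage hme).2 hsq
    rw [hpre] at h1
    rw [← hrestr]
    exact h1.congr_fun hK hmeas
  have hE1 : ∫ w in {w : ℂ | 0 < w.re}, ‖laplaceKernel α f z w‖ ^ 2
      = (2 * x) ^ α * ∫ p, ((2 * p.1) ^ α * ‖Φ p.1 p.2‖ ^ 2)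
        ∂((volume.restrict (Set.Ioi (0 : ℝ))).prod volume) := by
    rw [← hmp.setIntegral_preimage_emb hme, hpre, setIntegral_congr_fun hmeas hK, hrestr,
      integral_const_mul]
  have hI2 : Integrable (fun p : ℝ × ℝ => ((2 * p.1) ^ α * ‖Φ p.1 p.2‖ ^ 2))
      ((volume.restrict (Set.Ioi (0 : ℝ))).prod volume) := by
    have := hI1.const_mul ((2 * x) ^ α)⁻¹
    refine this.congr (Filter.Eventually.of_forall fun p => ?_)
    simp only
    field_simp
  have hP : ∀ᵐ u ∂(volume.restrict (Set.Ioi (0 : ℝ))),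
      IntegrableOn (fun t => f t ^ 2 * Real.exp (-(2 * t * (x + u)))) (Set.Ioi 0) ∧
      ∫ v : ℝ, (2 * u) ^ α * ‖Φ u v‖ ^ 2
        = 2 * Real.pi * ∫ t in Set.Ioi (0 : ℝ),
          (2 * u) ^ α * (f t ^ 2 * Real.exp (-(2 * t * (x + u)))) := by
    filter_upwards [hI2.prod_right_ae, ae_restrict_mem measurableSet_Ioi] with u hu hu0
    have hu0' : (0 : ℝ) < u := hu0
    have hua : (2 * u) ^ α ≠ 0 := by positivity
    have hv : Integrable (fun v => ‖Φ u v‖ ^ 2) := by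
      have := hu.const_mul ((2 * u) ^ α)⁻¹
      refine this.congr (Filter.Eventually.of_forall fun p => ?_)
      simp only
      field_simp
    obtain ⟨a, b⟩ := line_planch f hf x z.im u (hint _ (by positivity)) hv
    refine ⟨a, ?_⟩
    rw [integral_const_mul, integral_const_mul, b]; ring
  -- the (u,t) integral
  have hJ : Integrable (fun p : ℝ × ℝ => (2 * p.1) ^ α * (f p.2 ^ 2 * Real.exp (-(2 * p.2 * (x + p.1)))))
      ((volume.restrict (Set.Ioi (0 : ℝ))).prod (volume.restrict (Set.Ioi (0 : ℝ)))) := by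
    rw [integrable_prod_iff (by fun_prop)]
    constructor
    · filter_upwards [hP] with u hu
      exact hu.1.const_mul _
    · have := hI2.integral_prod_left.const_mul (2 * Real.pi)⁻¹
      refine this.congr ?_
      filter_upwards [hP, ae_restrict_mem measurableSet_Ioi] with u hu hu0
      have hu0' : (0 : ℝ) < u := hu0
      rw [hu.2, inv_mul_cancel_left₀ (by positivity)]
      congr 1; ext t
      rw [Real.norm_of_nonneg (by positivity)]
  have hin : ∀ t ∈ Set.Ioi (0 : ℝ), ∫ u in Set.Ioi (0 : ℝ),
      (2 * u) ^ α * (f t ^ 2 * Real.exp (-(2 * t * (x + u))))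
      = 1 / 2 * (Real.Gamma (α + 1) * t ^ (-(α + 1)) * f t ^ 2 * Real.exp (-(t * (2 * x)))) := by
    intro t ht
    have : ∀ u : ℝ, (2 * u) ^ α * (f t ^ 2 * Real.exp (-(2 * t * (x + u))))
        = (f t ^ 2 * Real.exp (-(t * (2 * x)))) * ((2 * u) ^ α * Real.exp (-(2 * t * u))) := by
      intro u
      rw [show -(2 * t * (x + u)) = -(t * (2 * x)) + -(2 * t * u) by ring, Real.exp_add]; ring
    simp only [this]
    rw [integral_const_mul, gamma_inner α hα t ht]; ring
  constructor
  · have := hJ.integral_prod_right.const_mul 2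
    refine Integrable.congr this ?_
    filter_upwards [ae_restrict_mem measurableSet_Ioi] with t ht
    rw [hin t ht]; ring
  · rw [hE1, integral_prod _ hI2, integral_congr_ae (hP.mono fun u hu => hu.2), integral_const_mul,
      integral_integral_swap hJ, setIntegral_congr_fun measurableSet_Ioi hin, integral_const_mul]
    field_simp

lemma kernel_diag (α : ℝ) (f : ℝ → ℝ) (z : ℂ) (hz : 0 < z.re) :
    laplaceKernel α f z z = (((2 * z.re) ^ α *
      ∫ t in Set.Ioi (0 : ℝ), f t * Real.exp (-(t * (2 * z.re))) : ℝ) : ℂ) := by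
  unfold laplaceKernel
  rw [← Real.rpow_add (by positivity), add_halves, Complex.ofReal_mul, ← integral_complex_ofReal]
  congr 2; ext t
  rw [Complex.add_conj]
  push_cast; congr 2; ring

/-- The mass-one equation `∫_{H₊} |K_f(z,w)|² dA(w) = K_f(z,z)` holds for all `z ∈ H₊`
    if and only if `f(s) = Γ(α+1)⁻¹ s^{α+1} 1_E(s)` a.e. on `(0,∞)`
    for some Borel set `E ⊆ (0,∞)`. -/
theorem mass_one_iff (α : ℝ) (hα : -1 < α) (f : ℝ → ℝ)
    (hf : Measurable f)
    (hint : ∀ x : ℝ, 0 < x →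
      IntegrableOn (fun t => f t * Real.exp (-(t * x))) (Set.Ioi 0))
    (hsq : ∀ z : ℂ, 0 < z.re →
      IntegrableOn (fun w => ‖laplaceKernel α f z w‖ ^ 2) {w : ℂ | 0 < w.re}) :
    (∀ z : ℂ, 0 < z.re →
        (((1 / Real.pi) * ∫ w in {w : ℂ | 0 < w.re}, ‖laplaceKernel α f z w‖ ^ 2 : ℝ) : ℂ)
          = laplaceKernel α f z z)
      ↔ ∃ E : Set ℝ, MeasurableSet E ∧ E ⊆ Set.Ioi 0 ∧
          ∀ᵐ s ∂(volume.restrict (Set.Ioi (0 : ℝ))),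
            f s = (Real.Gamma (α + 1))⁻¹ * s ^ (α + 1) * E.indicator (fun _ => (1 : ℝ)) s := by
  have hG : 0 < Real.Gamma (α + 1) := Real.Gamma_pos_of_pos (by linarith)
  have hiff : ∀ z : ℂ, 0 < z.re →
      ((((1 / Real.pi) * ∫ w in {w : ℂ | 0 < w.re}, ‖laplaceKernel α f z w‖ ^ 2 : ℝ) : ℂ)
          = laplaceKernel α f z z ↔
      ∫ t in Set.Ioi (0 : ℝ), Real.Gamma (α + 1) * t ^ (-(α + 1)) * f t ^ 2 *
        Real.exp (-(t * (2 * z.re))) =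
      ∫ t in Set.Ioi (0 : ℝ), f t * Real.exp (-(t * (2 * z.re)))) := by
    intro z hz
    rw [kernel_diag α f z hz, (mass_formula α hα f hf hint z hz (hsq z hz)).2, Complex.ofReal_inj]
    have : (2 * z.re) ^ α ≠ 0 := by positivity
    exact mul_right_inj' this
  constructor
  · intro H
    have hi : ∀ x : ℝ, 0 < x → IntegrableOn (fun t => Real.Gamma (α + 1) * t ^ (-(α + 1)) * f t ^ 2 *
        Real.exp (-(t * x))) (Set.Ioi 0) := by
      intro x hx
      have hre : ((x / 2 : ℝ) : ℂ).re = x / 2 := Complex.ofReal_re _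
      have hz : 0 < ((x / 2 : ℝ) : ℂ).re := by rw [hre]; positivity
      have := (mass_formula α hα f hf hint _ hz (hsq _ hz)).1
      rw [hre, mul_div_cancel₀ _ two_ne_zero] at this
      exact this
    have h0 := laplace_unique
      (fun t => Real.Gamma (α + 1) * t ^ (-(α + 1)) * f t ^ 2 - f t) (by fun_prop)
      (fun x hx => by
        simp only [sub_mul]
        exact (hi x hx).sub (hint x hx))
      (fun x hx => by
        simp only [sub_mul]
        have hre : ((x / 2 : ℝ) : ℂ).re = x / 2 := Complex.ofReal_re _
        have hz : 0 < ((x / 2 : ℝ) : ℂ).re := by rw [hre]; positivity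
        have := (hiff _ hz).1 (H _ hz)
        rw [hre, mul_div_cancel₀ _ two_ne_zero] at this
        rw [integral_sub (hi x hx) (hint x hx), this, sub_self])
    refine ⟨Set.Ioi 0 ∩ (f ⁻¹' {0})ᶜ, measurableSet_Ioi.inter
      (hf (measurableSet_singleton 0)).compl, Set.inter_subset_left, ?_⟩
    filter_upwards [h0, ae_restrict_mem measurableSet_Ioi] with s hs hs0
    have hs0' : (0 : ℝ) < s := hs0
    by_cases hfs : f s = 0
    · rw [Set.indicator_of_notMem (by simp [hfs]), hfs, mul_zero]
    · rw [Set.indicator_of_mem (by simp [hfs, hs0']), mul_one]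
      rw [Real.rpow_neg hs0'.le] at hs
      have hp : 0 < s ^ (α + 1) := by positivity
      field_simp at hs ⊢
      rw [mul_zero] at hs
      rcases mul_eq_zero.1 hs with h | h
      · exact absurd h hfs
      · linarith
  · rintro ⟨E, hE, -, hfE⟩ z hz
    rw [hiff z hz]
    apply integral_congr_ae
    filter_upwards [hfE, ae_restrict_mem measurableSet_Ioi] with s hs hs0
    have hs0' : (0 : ℝ) < s := hs0
    have hp : 0 < s ^ (α + 1) := by positivity
    congr 1
    rw [Real.rpow_neg hs0'.le, hs]
    by_cases hsE : s ∈ E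
    · rw [Set.indicator_of_mem hsE]
      field_simp
    · rw [Set.indicator_of_notMem hsE]; simp
end

section
/- For z, w ∈ H₊, write x = Re z. With f(s) = Γ(α+1)^{-1} s^{α+1} 1_{(0,1)}(s), K = K_f, R(z) = K(z,z), and C(z) = ∫_{H₊} |K(z,w)|²/(K(z,z)) · 1/(z-w) dA(w), one has R(z)C(z) = -L₁(z) + L₂(z), where L₁(z) = R(z) ∫₀^∞ f(s) s^{-(α+1)} Γ(α+1, 2xs) ds and L₂(z) = (2x)^α ∫₀^∞ ∫₀^t f(s) f(t) e^{-2xt} s^{-(α+1)} Γ(α+1) ds dt. -/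
open MeasureTheory Complex

/-- The density `f(s) = Γ(α+1)⁻¹ s^{α+1} 1_{(0,1)}(s)`. -/
noncomputable def hardWallDensityFn (α : ℝ) (s : ℝ) : ℝ :=
  if s ∈ Set.Ioo (0 : ℝ) 1 then s ^ (α + 1) / Real.Gamma (α + 1) else 0

/-- The limiting hard-wall kernel `K = K_f` with `f = hardWallDensityFn α`. -/
noncomputable def hardWallK (α : ℝ) (z w : ℂ) : ℂ :=
  (((2 * z.re) ^ (α / 2) * (2 * w.re) ^ (α / 2) : ℝ) : ℂ) *
    ∫ t in Set.Ioi (0 : ℝ),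
      ((hardWallDensityFn α t : ℝ) : ℂ) * Complex.exp (-(t : ℂ) * (z + (starRingEnd ℂ) w))

/-- The Cauchy transform `C(z) = ∫_{H₊} |K(z,w)|²/K(z,z) · 1/(z-w) dA(w)`. -/
noncomputable def hardWallCauchy (α : ℝ) (z : ℂ) : ℂ :=
  (1 / (Real.pi : ℂ)) *
    ∫ w in {w : ℂ | 0 < w.re},
      ((‖hardWallK α z w‖ ^ 2 : ℝ) : ℂ) / hardWallK α z z * (1 / (z - w))

/-- The upper incomplete gamma function `Γ(a,y) = ∫_y^∞ t^{a-1} e^{-t} dt`. -/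
noncomputable def upperGamma (a y : ℝ) : ℝ :=
  ∫ t in Set.Ioi y, t ^ (a - 1) * Real.exp (-t)

/-- `L₁(z) = R(z) ∫₀^∞ f(s) s^{-(α+1)} Γ(α+1, 2xs) ds` with `x = Re z`. -/
noncomputable def hardWallL1 (α : ℝ) (z : ℂ) : ℂ :=
  hardWallK α z z *
    ((∫ s in Set.Ioi (0 : ℝ),
      hardWallDensityFn α s * s ^ (-(α + 1)) * upperGamma (α + 1) (2 * z.re * s) : ℝ) : ℂ)

/-- `L₂(z) = (2x)^α ∫₀^∞ ∫₀^t f(s) f(t) e^{-2xt} s^{-(α+1)} Γ(α+1) ds dt`. -/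
noncomputable def hardWallL2 (α : ℝ) (z : ℂ) : ℂ :=
  (((2 * z.re) ^ α : ℝ) : ℂ) *
    ((∫ t in Set.Ioi (0 : ℝ), ∫ s in Set.Ioc (0 : ℝ) t,
      hardWallDensityFn α s * hardWallDensityFn α t * Real.exp (-(2 * z.re * t)) *
        s ^ (-(α + 1)) * Real.Gamma (α + 1) : ℝ) : ℂ)

open FourierTransform Convolution

lemma hw_parseval (h k : ℝ → ℂ) (hh : Integrable h) (hk : Integrable k)
    (hprod : Integrable (fun ξ => 𝓕 h ξ * 𝓕 k ξ))
    (hcont : Continuous (fun t => ∫ s, h s * k (t - s))) :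
    ∫ ξ, (starRingEnd ℂ) (𝓕 h ξ) * (𝓕 h ξ * 𝓕 k ξ)
      = ∫ t, (starRingEnd ℂ) (h t) * ∫ s, h s * k (t - s) := by
  set H : ℝ → ℂ := fun t => ∫ s, h s * k (t - s) with hH
  have hHc : H = h ⋆[ContinuousLinearMap.mul ℂ ℂ] k := by
    ext t; simp [hH, MeasureTheory.convolution]
  have hHi : Integrable H := by
    rw [hHc]; exact hh.integrable_convolution _ hk
  have hFH : 𝓕 H = fun ξ => 𝓕 h ξ * 𝓕 k ξ := by
    ext ξ; rw [hHc]; exact Real.fourier_mul_convolution_eq hh hk ξ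
  have hFi : Integrable (𝓕 H) := by rw [hFH]; exact hprod
  have key := VectorFourier.integral_sesq_fourierIntegral_eq_neg_flip (innerSL ℂ)
    (L := innerₗ ℝ) (μ := volume) (ν := volume) (e := Real.fourierChar) Real.continuous_fourierChar continuous_inner hh hFi
  have e2 : ∀ t, VectorFourier.fourierIntegral Real.fourierChar volume (-(innerₗ ℝ).flip) (𝓕 H) t = H t := by
    intro t
    rw [← congrFun (hcont.fourierInv_fourier_eq hHi hFi) t]
    simp [Real.fourierInv_eq, VectorFourier.fourierIntegral]
  simp only [e2] at key
  have hFH' : ∀ ξ, 𝓕 h ξ * 𝓕 k ξ = 𝓕 H ξ := fun ξ => (congrFun hFH ξ).symm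
  simp_rw [hFH']
  simpa [mul_comm] using! key
/-- The real kernel whose Fourier transform is `1 / (a + 2πiξ)`. -/
noncomputable def hwKer (a τ : ℝ) : ℝ :=
  if 0 < a then (if 0 ≤ τ then Real.exp (-(τ * a)) else 0)
  else (if τ < 0 then -Real.exp (-(τ * a)) else 0)

lemma hwKer_pos {a : ℝ} (ha : 0 < a) :
    hwKer a = (Set.Ici (0 : ℝ)).indicator (fun τ => Real.exp (-(τ * a))) := by
  ext τ; simp [hwKer, ha, Set.indicator]

lemma hwKer_neg {a : ℝ} (ha : a < 0) :
    hwKer a = (Set.Iio (0 : ℝ)).indicator (fun τ => -Real.exp (-(τ * a))) := by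
  ext τ; simp [hwKer, ha.le.not_gt, Set.indicator]

lemma hwKer_measurable (a : ℝ) : Measurable (hwKer a) := by
  unfold hwKer
  split_ifs
  · exact Measurable.ite measurableSet_Ici (by fun_prop) measurable_const
  · exact Measurable.ite measurableSet_Iio (by fun_prop) measurable_const

lemma hwKer_integrable {a : ℝ} (ha : a ≠ 0) : Integrable (hwKer a) := by
  rcases lt_or_gt_of_ne ha with h | h
  · rw [hwKer_neg h, integrable_indicator_iff measurableSet_Iio]
    refine Integrable.neg ?_
    have := integrableOn_exp_mul_Iic (a := -a) (by linarith) 0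
    refine (this.mono_set Set.Iio_subset_Iic_self).congr_fun (fun x _ => ?_) measurableSet_Iio
    simp [mul_comm]
  · rw [hwKer_pos h, integrable_indicator_iff measurableSet_Ici, integrableOn_Ici_iff_integrableOn_Ioi]
    have := integrableOn_exp_mul_Ioi (a := -a) (by linarith) 0
    refine this.congr_fun (fun x _ => ?_) measurableSet_Ioi
    simp [mul_comm]

lemma hwKer_norm_le (a τ : ℝ) : ‖hwKer a τ‖ ≤ 1 := by
  unfold hwKer
  split_ifs with h1 h2 h2
  · rw [Real.norm_of_nonneg (Real.exp_pos _).le]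
    exact Real.exp_le_one_iff.2 (by nlinarith)
  · simp
  · rw [norm_neg, Real.norm_of_nonneg (Real.exp_pos _).le]
    exact Real.exp_le_one_iff.2 (by nlinarith)
  · simp

lemma hwKer_continuousAt (a : ℝ) {τ : ℝ} (hτ : τ ≠ 0) : ContinuousAt (hwKer a) τ := by
  have hc : Continuous fun τ : ℝ => Real.exp (-(τ * a)) := by fun_prop
  unfold hwKer
  rcases lt_or_gt_of_ne hτ with h | h
  · split_ifs
    · refine continuousAt_const.congr (f := fun _ => (0:ℝ)) ?_
      filter_upwards [Iio_mem_nhds h] with x hx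
      simp [not_le.2 (Set.mem_Iio.1 hx)]
    · refine (hc.neg.continuousAt).congr ?_
      filter_upwards [Iio_mem_nhds h] with x hx
      simp [(Set.mem_Iio.1 hx)]
  · split_ifs
    · refine (hc.continuousAt).congr ?_
      filter_upwards [Ioi_mem_nhds h] with x hx
      simp [(Set.mem_Ioi.1 hx).le]
    · refine continuousAt_const.congr (f := fun _ => (0:ℝ)) ?_
      filter_upwards [Ioi_mem_nhds h] with x hx
      simp [(Set.mem_Ioi.1 hx).le]

lemma hwKer_fourier {a : ℝ} (ha : a ≠ 0) (ξ : ℝ) :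
    𝓕 (fun τ => (hwKer a τ : ℂ)) ξ = 1 / ((a : ℂ) + I * ((2 * Real.pi * ξ : ℝ) : ℂ)) := by
  rw [Real.fourier_eq']
  set c : ℂ := -((a : ℂ) + I * ((2 * Real.pi * ξ : ℝ) : ℂ)) with hc
  have hcre : c.re = -a := by simp [hc]
  rcases lt_or_gt_of_ne ha with h | h
  · have e : ∀ v : ℝ, cexp (↑(-2 * Real.pi * inner ℝ v ξ) * I) • ((hwKer a v : ℝ) : ℂ)
        = (Set.Iio (0:ℝ)).indicator (fun v : ℝ => -cexp (c * v)) v := by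
      intro v
      rw [hwKer_neg h]
      by_cases hv : v ∈ Set.Iio (0:ℝ)
      · simp only [Set.indicator_of_mem hv, hc]
        push_cast
        simp only [smul_eq_mul, mul_neg, ← Complex.exp_add]
        congr 2
        simp
        ring
      · simp [Set.indicator_of_notMem hv]
    simp_rw [e]
    rw [integral_indicator measurableSet_Iio, integral_neg, ← integral_Iic_eq_integral_Iio,
      integral_exp_mul_complex_Iic (by rw [hcre]; linarith)]
    simp only [hc, ofReal_zero, mul_zero, Complex.exp_zero]
    rw [div_neg, neg_neg]
  · have e : ∀ v : ℝ, cexp (↑(-2 * Real.pi * inner ℝ v ξ) * I) • ((hwKer a v : ℝ) : ℂ)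
        = (Set.Ici (0:ℝ)).indicator (fun v : ℝ => cexp (c * v)) v := by
      intro v
      rw [hwKer_pos h]
      by_cases hv : v ∈ Set.Ici (0:ℝ)
      · simp only [Set.indicator_of_mem hv, hc]
        push_cast
        simp only [smul_eq_mul, mul_neg, ← Complex.exp_add]
        congr 1
        simp
        ring
      · simp [Set.indicator_of_notMem hv]
    simp_rw [e]
    rw [integral_indicator measurableSet_Ici, integral_Ici_eq_integral_Ioi,
      integral_exp_mul_complex_Ioi (by rw [hcre]; linarith)]
    simp only [hc, ofReal_zero, mul_zero, Complex.exp_zero]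
    rw [neg_div_neg_eq]

lemma hwKer_conv_continuous (a : ℝ) {h : ℝ → ℂ} (hh : Integrable h) :
    Continuous (fun t => ∫ s, h s * (hwKer a (t - s) : ℂ)) := by
  rw [continuous_iff_continuousAt]
  intro t
  refine continuousAt_of_dominated (bound := fun s => ‖h s‖) ?_ ?_ hh.norm ?_
  · refine Filter.Eventually.of_forall fun t => ?_
    refine hh.aestronglyMeasurable.mul ?_
    have : Measurable fun s => ((hwKer a (t - s) : ℝ) : ℂ) :=
      Complex.measurable_ofReal.comp ((hwKer_measurable a).comp (by fun_prop))
    exact this.aestronglyMeasurable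
  · refine Filter.Eventually.of_forall fun t => Filter.Eventually.of_forall fun s => ?_
    rw [norm_mul, Complex.norm_real]
    exact mul_le_of_le_one_right (norm_nonneg _) (hwKer_norm_le _ _)
  · have : ∀ᵐ s : ℝ, s ≠ t := by
      simp [ae_iff]
    filter_upwards [this] with s hs
    have h1 : ContinuousAt (fun t : ℝ => hwKer a (t - s)) t :=
      ContinuousAt.comp (f := fun t : ℝ => t - s) (hwKer_continuousAt a (sub_ne_zero.2 hs.symm))
        (by fun_prop)
    exact continuousAt_const.mul (Complex.continuous_ofReal.continuousAt.comp h1)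

/-- The Laplace transform of the density. -/
noncomputable def hwI (α : ℝ) (p : ℂ) : ℂ :=
  ∫ t in Set.Ioi (0 : ℝ), ((hardWallDensityFn α t : ℝ) : ℂ) * Complex.exp (-(t : ℂ) * p)

lemma hw_f_eq (α : ℝ) : hardWallDensityFn α =
    (Set.Ioo (0:ℝ) 1).indicator (fun s => s ^ (α + 1) / Real.Gamma (α + 1)) := by
  ext s; simp [hardWallDensityFn, Set.indicator]

lemma hw_f_measurable (α : ℝ) : Measurable (hardWallDensityFn α) := by
  rw [hw_f_eq]
  exact Measurable.indicator (by fun_prop) measurableSet_Ioo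

lemma hw_f_nonneg {α : ℝ} (hα : -1 < α) (s : ℝ) : 0 ≤ hardWallDensityFn α s := by
  have := Real.Gamma_pos_of_pos (s := α + 1) (by linarith)
  unfold hardWallDensityFn
  split_ifs with h
  · have := h.1
    positivity
  · exact le_rfl

lemma hw_f_integrable {α : ℝ} (hα : -1 < α) : Integrable (hardWallDensityFn α) := by
  rw [hw_f_eq, integrable_indicator_iff measurableSet_Ioo]
  refine Integrable.div_const ?_ _
  have := intervalIntegral.intervalIntegrable_rpow' (r := α + 1) (a := 0) (b := 1) (by linarith)
  rw [intervalIntegrable_iff_integrableOn_Ioo_of_le zero_le_one] at this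
  exact this

lemma hw_f_zero_of_nonpos (α : ℝ) {s : ℝ} (hs : s ≤ 0) : hardWallDensityFn α s = 0 := by
  simp [hardWallDensityFn, hs.not_gt]

/-- integrals of things vanishing off the positive half line -/
lemma hw_setIntegral_Ioi {E : Type*} [NormedAddCommGroup E] [NormedSpace ℝ E] (g : ℝ → E)
    (hg : ∀ s ≤ 0, g s = 0) : ∫ s in Set.Ioi (0:ℝ), g s = ∫ s, g s := by
  refine setIntegral_eq_integral_of_forall_compl_eq_zero fun s hs => hg s (by simpa using hs)

lemma hw_h_integrable {α : ℝ} (hα : -1 < α) {q : ℝ} (hq : 0 < q) :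
    Integrable (fun t => hardWallDensityFn α t * Real.exp (-(t * q))) := by
  refine (hw_f_integrable hα).mono ?_ ?_
  · exact ((hw_f_measurable α).mul (by fun_prop)).aestronglyMeasurable
  · refine Filter.Eventually.of_forall fun t => ?_
    rcases le_or_gt t 0 with h | h
    · simp [hw_f_zero_of_nonpos α h]
    · rw [norm_mul, Real.norm_of_nonneg (Real.exp_pos _).le]
      exact mul_le_of_le_one_right (norm_nonneg _) (Real.exp_le_one_iff.2 (by nlinarith))

lemma hw_h_fourier (α q ξ : ℝ) :
    𝓕 (fun t => ((hardWallDensityFn α t * Real.exp (-(t * q)) : ℝ) : ℂ)) ξ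
      = hwI α ((q : ℂ) + I * ((2 * Real.pi * ξ : ℝ) : ℂ)) := by
  rw [Real.fourier_eq', hwI, hw_setIntegral_Ioi _ (fun s hs => by simp [hw_f_zero_of_nonpos α hs])]
  congr 1
  ext t
  push_cast
  rw [smul_eq_mul, mul_left_comm, ← Complex.exp_add]
  congr 2
  simp
  ring

lemma hw_I_bound {α : ℝ} (hα : -1 < α) {p : ℂ} (hp : 0 < p.re) :
    ‖hwI α p‖ ≤ 2 * (α + 1) * p.re ^ (-(α + 1)) * ‖p‖⁻¹ := by
  have hG := Real.Gamma_pos_of_pos (s := α + 1) (by linarith)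
  have hp0 : p ≠ 0 := by rintro rfl; simp at hp
  have hpn : 0 < ‖p‖ := norm_pos_iff.2 hp0
  have hα1 : 0 < α + 1 := by linarith
  -- the Laplace transform as an interval integral
  set J : ℂ := ∫ s in (0:ℝ)..1, ((s ^ (α + 1) : ℝ) : ℂ) * cexp (-(s : ℂ) * p) with hJ
  have hIJ : hwI α p = J / (Real.Gamma (α + 1) : ℂ) := by
    rw [hwI, hJ, intervalIntegral.integral_of_le zero_le_one, integral_Ioc_eq_integral_Ioo,
      ← integral_div, hw_f_eq, hw_setIntegral_Ioi _ (fun s hs => by simp [hs.not_gt]),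
      ← integral_indicator measurableSet_Ioo]
    congr 1
    ext s
    by_cases hs : s ∈ Set.Ioo (0:ℝ) 1
    · simp only [Set.indicator_of_mem hs]
      push_cast; ring
    · simp [Set.indicator_of_notMem hs]
  have hi0 : IntervalIntegrable (fun s : ℝ => s ^ α) volume 0 1 :=
    intervalIntegral.intervalIntegrable_rpow' hα
  have hi0' : IntervalIntegrable (fun s : ℝ => s ^ (α + 1)) volume 0 1 :=
    intervalIntegral.intervalIntegrable_rpow' (by linarith)
  have hi1 : IntervalIntegrable (fun s : ℝ => ((s ^ α : ℝ) : ℂ) * cexp (-(s : ℂ) * p)) volume 0 1 :=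
    IntervalIntegrable.mul_continuousOn ⟨hi0.1.ofReal, hi0.2.ofReal⟩ (by fun_prop)
  have hi2 : IntervalIntegrable (fun s : ℝ => ((s ^ (α + 1) : ℝ) : ℂ) * cexp (-(s : ℂ) * p))
      volume 0 1 :=
    IntervalIntegrable.mul_continuousOn ⟨hi0'.1.ofReal, hi0'.2.ofReal⟩ (by fun_prop)
  have hir : IntervalIntegrable (fun s : ℝ => s ^ α * Real.exp (-(p.re * s))) volume 0 1 :=
    hi0.mul_continuousOn (by fun_prop)
  have hFTC : ∫ s in (0:ℝ)..1, (((α + 1 : ℝ) : ℂ) * (((s ^ α : ℝ) : ℂ) * cexp (-(s : ℂ) * p))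
      - p * (((s ^ (α + 1) : ℝ) : ℂ) * cexp (-(s : ℂ) * p))) = cexp (-p) := by
    have := intervalIntegral.integral_eq_sub_of_hasDerivAt_of_le (a := 0) (b := 1)
      (f := fun s : ℝ => ((s ^ (α + 1) : ℝ) : ℂ) * cexp (-(s : ℂ) * p))
      (f' := fun s : ℝ => (((α + 1 : ℝ) : ℂ) * (((s ^ α : ℝ) : ℂ) * cexp (-(s : ℂ) * p))
      - p * (((s ^ (α + 1) : ℝ) : ℂ) * cexp (-(s : ℂ) * p)))) zero_le_one ?_ ?_
      ((hi1.const_mul _).sub (hi2.const_mul _))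
    · rw [this]
      simp [Real.zero_rpow hα1.ne']
    · refine Continuous.continuousOn ?_
      have : Continuous fun s : ℝ => s ^ (α + 1) := Real.continuous_rpow_const hα1.le
      fun_prop
    · intro s hs
      have h1 := (Real.hasDerivAt_rpow_const (x := s) (p := α + 1) (Or.inl hs.1.ne')).ofReal_comp
      have h2 : HasDerivAt (fun s : ℝ => cexp (-(s : ℂ) * p)) (cexp (-(s : ℂ) * p) * (-1 * p)) s :=
        (((Complex.ofRealCLM.hasDerivAt (x := s)).neg).mul_const p).cexp
      refine (h1.mul h2).congr_deriv ?_
      rw [add_sub_cancel_right]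
      push_cast
      ring
  rw [intervalIntegral.integral_sub (hi1.const_mul _) (hi2.const_mul _),
    intervalIntegral.integral_const_mul, intervalIntegral.integral_const_mul, ← hJ] at hFTC
  set M : ℝ := ∫ s in (0:ℝ)..1, s ^ α * Real.exp (-(p.re * s)) with hM
  have hA : ‖∫ s in (0:ℝ)..1, (((s ^ α : ℝ) : ℂ) * cexp (-(s : ℂ) * p))‖ ≤ M := by
    refine intervalIntegral.norm_integral_le_of_norm_le zero_le_one ?_ hir
    refine Filter.Eventually.of_forall fun s hs => ?_
    rw [norm_mul, Complex.norm_real, Complex.norm_exp,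
      Real.norm_of_nonneg (Real.rpow_nonneg hs.1.le _)]
    simp [mul_comm]
  have hB : ‖cexp (-p)‖ ≤ (α + 1) * M := by
    have e1 : (α + 1) * ∫ s in (0:ℝ)..1, s ^ α * Real.exp (-p.re) = Real.exp (-p.re) := by
      rw [intervalIntegral.integral_mul_const, integral_rpow (Or.inl hα)]
      simp [Real.zero_rpow hα1.ne']
      field_simp
    rw [Complex.norm_exp, Complex.neg_re, ← e1]
    refine mul_le_mul_of_nonneg_left ?_ hα1.le
    refine intervalIntegral.integral_mono_on zero_le_one (hi0.mul_const _) hir fun s hs => ?_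
    refine mul_le_mul_of_nonneg_left (Real.exp_le_exp.2 ?_) (Real.rpow_nonneg hs.1 _)
    nlinarith [hs.2]
  have hC : M ≤ p.re ^ (-(α + 1)) * Real.Gamma (α + 1) := by
    have h := Real.integral_rpow_mul_exp_neg_mul_Ioi hα1 hp
    rw [one_div, Real.inv_rpow hp.le, ← Real.rpow_neg hp.le] at h
    rw [← h, hM, intervalIntegral.integral_of_le zero_le_one, add_sub_cancel_right]
    refine setIntegral_mono_set ?_ ?_ (Filter.Eventually.of_forall Set.Ioc_subset_Ioi_self)
    · have := integrableOn_rpow_mul_exp_neg_mul_rpow (s := α) (p := 1) (b := p.re) hα one_pos hp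
      simpa using this
    · filter_upwards [ae_restrict_mem measurableSet_Ioi] with s hs
      have : 0 < s := hs
      positivity
  have hJb : ‖p‖ * ‖J‖ ≤ 2 * (α + 1) * (p.re ^ (-(α + 1)) * Real.Gamma (α + 1)) := by
    rw [← norm_mul]
    have : p * J = ((α + 1 : ℝ) : ℂ) * (∫ s in (0:ℝ)..1, (((s ^ α : ℝ) : ℂ) * cexp (-(s : ℂ) * p)))
        - cexp (-p) := by rw [← hFTC]; ring
    rw [this]
    refine (norm_sub_le _ _).trans ?_
    rw [norm_mul, Complex.norm_real, Real.norm_of_nonneg hα1.le]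
    nlinarith
  rw [hIJ, norm_div, Complex.norm_real, Real.norm_of_nonneg hG.le, div_le_iff₀ hG,
    ← div_eq_mul_inv, div_mul_eq_mul_div, le_div_iff₀ hpn]
  linarith

lemma hw_integrable_inv {q : ℝ} (hq : q ≠ 0) :
    Integrable (fun η : ℝ => (q ^ 2 + η ^ 2)⁻¹) := by
  have h := (integrable_inv_one_add_sq.comp_mul_left' (inv_ne_zero hq)).const_mul (q ^ 2)⁻¹
  refine h.congr (Filter.Eventually.of_forall fun η => ?_)
  simp only
  rw [← mul_inv]; congr 1; field_simp

lemma hw_norm_sq (q η : ℝ) : ‖(q : ℂ) + I * (η : ℂ)‖ ^ 2 = q ^ 2 + η ^ 2 := by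
  rw [Complex.sq_norm, Complex.normSq_apply]; simp; ring

lemma hw_I_stronglyMeasurable (α : ℝ) : StronglyMeasurable (hwI α) := by
  unfold hwI
  refine StronglyMeasurable.integral_prod_right (f := fun (p : ℂ) (t : ℝ) =>
    ((hardWallDensityFn α t : ℝ) : ℂ) * Complex.exp (-(t : ℂ) * p)) ?_
  refine Measurable.stronglyMeasurable ?_
  have := hw_f_measurable α
  simp only [Function.uncurry_def]
  fun_prop

lemma hw_V {α : ℝ} (hα : -1 < α) {q a : ℝ} (hq : 0 < q) (ha : a ≠ 0) :
    ∫ η : ℝ, ((‖hwI α ((q : ℂ) + I * (η : ℂ))‖ ^ 2 : ℝ) : ℂ) * (1 / ((a : ℂ) + I * (η : ℂ)))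
      = ((2 * Real.pi * ∫ t, ∫ s, hardWallDensityFn α t * hardWallDensityFn α s *
          Real.exp (-((t + s) * q)) * hwKer a (t - s) : ℝ) : ℂ) := by
  have hpi : (2 * Real.pi) ≠ 0 := by positivity
  have hsub := Measure.integral_comp_mul_left (fun η : ℝ =>
    ((‖hwI α ((q : ℂ) + I * (η : ℂ))‖ ^ 2 : ℝ) : ℂ) * (1 / ((a : ℂ) + I * (η : ℂ)))) (2 * Real.pi)
  set h : ℝ → ℂ := fun t => ((hardWallDensityFn α t * Real.exp (-(t * q)) : ℝ) : ℂ) with hh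
  have hint : Integrable h := (hw_h_integrable hα hq).ofReal
  have hk : Integrable (fun τ => (hwKer a τ : ℂ)) := (hwKer_integrable ha).ofReal
  have hFh := hw_h_fourier α q
  have hFk := hwKer_fourier ha
  have hmeas : StronglyMeasurable fun ξ : ℝ => 𝓕 h ξ * 𝓕 (fun τ => (hwKer a τ : ℂ)) ξ := by
    simp_rw [hh, hFh, hFk]
    refine StronglyMeasurable.mul ((hw_I_stronglyMeasurable α).comp_measurable (by fun_prop)) ?_
    exact Measurable.stronglyMeasurable (by fun_prop)
  have hprod : Integrable (fun ξ => 𝓕 h ξ * 𝓕 (fun τ => (hwKer a τ : ℂ)) ξ) := by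
    have g1 := ((hw_integrable_inv hq.ne').comp_mul_left' hpi)
    have g2 := ((hw_integrable_inv ha).comp_mul_left' hpi)
    refine ((g1.add g2).const_mul (2 * (α + 1) * q ^ (-(α + 1)))).mono' hmeas.aestronglyMeasurable ?_
    refine Filter.Eventually.of_forall fun ξ => ?_
    simp_rw [hh, hFh, hFk, Pi.add_apply, ← hw_norm_sq]
    set η := 2 * Real.pi * ξ
    have hb := hw_I_bound hα (p := (q : ℂ) + I * (η : ℂ)) (by simpa using hq)
    have hre : ((q : ℂ) + I * (η : ℂ)).re = q := by simp
    rw [hre] at hb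
    rw [norm_mul, norm_div, norm_one, one_div]
    have hC : 0 ≤ 2 * (α + 1) * q ^ (-(α + 1)) := by
      have : 0 < α + 1 := by linarith
      positivity
    refine (mul_le_mul_of_nonneg_right hb (by positivity)).trans ?_
    rw [mul_assoc]
    refine mul_le_mul_of_nonneg_left ?_ hC
    rw [← inv_pow, ← inv_pow]
    nlinarith [sq_nonneg (‖(q : ℂ) + I * (η : ℂ)‖⁻¹ - ‖(a : ℂ) + I * (η : ℂ)‖⁻¹),
      sq_nonneg (‖(q : ℂ) + I * (η : ℂ)‖⁻¹), sq_nonneg (‖(a : ℂ) + I * (η : ℂ)‖⁻¹)]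
  have key := hw_parseval h _ hint hk hprod (hwKer_conv_continuous a hint)
  have e1 : ∀ ξ : ℝ, (starRingEnd ℂ) (𝓕 h ξ) * (𝓕 h ξ * 𝓕 (fun τ => (hwKer a τ : ℂ)) ξ)
      = ((‖hwI α ((q : ℂ) + I * ((2 * Real.pi * ξ : ℝ) : ℂ))‖ ^ 2 : ℝ) : ℂ) *
        (1 / ((a : ℂ) + I * ((2 * Real.pi * ξ : ℝ) : ℂ))) := by
    intro ξ
    rw [← mul_assoc, hh, hFh, hFk, ← Complex.normSq_eq_conj_mul_self, Complex.normSq_eq_norm_sq]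
  simp_rw [e1] at key
  rw [key] at hsub
  have e2 : ∫ t, (starRingEnd ℂ) (h t) * ∫ s, h s * (hwKer a (t - s) : ℂ)
      = ((∫ t, ∫ s, hardWallDensityFn α t * hardWallDensityFn α s *
          Real.exp (-((t + s) * q)) * hwKer a (t - s) : ℝ) : ℂ) := by
    rw [← integral_complex_ofReal]
    congr 1; ext t
    rw [← integral_complex_ofReal, ← integral_const_mul]
    congr 1; ext s
    simp only [hh, Complex.conj_ofReal]
    rw [← Complex.ofReal_mul, ← Complex.ofReal_mul]
    congr 1
    rw [show -((t + s) * q) = -(t * q) + -(s * q) by ring, Real.exp_add]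
    ring
  rw [e2, abs_of_pos (by positivity)] at hsub
  rw [Complex.ofReal_mul, hsub, Complex.real_smul, ← mul_assoc, ← Complex.ofReal_mul,
    mul_inv_cancel₀ hpi]
  simp

lemma hw_upperGamma {α : ℝ} (hα : -1 < α) {s : ℝ} (hs : 0 < s) {c : ℝ} (hc : 0 ≤ c) :
    ∫ u in Set.Ioi c, (2 * u) ^ α * Real.exp (-(2 * s * u))
      = 1 / 2 * (s ^ (-(α + 1)) * upperGamma (α + 1) (2 * c * s)) := by
  have h := integral_comp_mul_left_Ioi (fun y : ℝ => y ^ α * Real.exp (-y)) c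
    (b := 2 * s) (by positivity)
  have e : ∫ u in Set.Ioi c, (2 * u) ^ α * Real.exp (-(2 * s * u))
      = ∫ u in Set.Ioi c, s ^ (-α) * ((2 * s * u) ^ α * Real.exp (-(2 * s * u))) := by
    refine setIntegral_congr_fun measurableSet_Ioi fun u hu => ?_
    have hu0 : 0 < u := lt_of_le_of_lt hc hu
    rw [show 2 * s * u = s * (2 * u) by ring, Real.mul_rpow hs.le (by positivity), Real.rpow_neg hs.le]
    have : s ^ α ≠ 0 := (Real.rpow_pos_of_pos hs _).ne'
    field_simp
  rw [e, integral_const_mul, h, upperGamma, show 2 * c * s = 2 * s * c by ring,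
    show -(α + 1) = -α + -1 by ring, Real.rpow_add hs, Real.rpow_neg_one, smul_eq_mul, mul_inv,
    add_sub_cancel_right]
  ring

lemma hw_upperGamma_zero (α : ℝ) (hα : -1 < α) : upperGamma (α + 1) 0 = Real.Gamma (α + 1) := by
  rw [upperGamma, Real.Gamma_eq_integral (by linarith)]
  simp_rw [mul_comm]

lemma hw_u_integrable {α : ℝ} (hα : -1 < α) {s : ℝ} (hs : 0 < s) :
    IntegrableOn (fun u => (2 * u) ^ α * Real.exp (-(2 * s * u))) (Set.Ioi 0) := by
  have h := integrableOn_rpow_mul_exp_neg_mul_rpow (s := α) (p := 1) (b := 2 * s) hα one_pos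
    (by positivity)
  have h2 : IntegrableOn (fun u : ℝ => 2 ^ α * (u ^ α * Real.exp (-(2 * s) * u ^ (1:ℝ))))
    (Set.Ioi 0) := h.const_mul (2 ^ α)
  refine h2.congr_fun (fun u hu => ?_) measurableSet_Ioi
  have : 0 < u := hu
  simp only [Real.rpow_one]
  rw [Real.mul_rpow (by norm_num) this.le, neg_mul]
  ring

/-- the weight in the variables `(u, s)` -/
noncomputable def hwE (α : ℝ) (p : ℝ × ℝ) : ℝ :=
  (2 * p.1) ^ α * Real.exp (-(2 * p.2 * p.1)) * hardWallDensityFn α p.2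

lemma hwE_measurable (α : ℝ) : Measurable (hwE α) := by
  have := hw_f_measurable α
  unfold hwE
  fun_prop

lemma hw_f_mul_rpow (α : ℝ) (s : ℝ) : s ^ (-(α + 1)) * hardWallDensityFn α s
    = (Set.Ioo (0:ℝ) 1).indicator (fun _ => (Real.Gamma (α + 1))⁻¹) s := by
  rw [hw_f_eq]
  by_cases hs : s ∈ Set.Ioo (0:ℝ) 1
  · simp only [Set.indicator_of_mem hs]
    rw [Real.rpow_neg hs.1.le]
    have : s ^ (α + 1) ≠ 0 := (Real.rpow_pos_of_pos hs.1 _).ne'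
    field_simp
  · simp [Set.indicator_of_notMem hs]

lemma hwE_integrable {α : ℝ} (hα : -1 < α) :
    Integrable (hwE α) ((volume.restrict (Set.Ioi (0:ℝ))).prod volume) := by
  rw [integrable_prod_iff' (hwE_measurable α).aestronglyMeasurable]
  constructor
  · refine Filter.Eventually.of_forall fun s => ?_
    rcases le_or_gt s 0 with h | h
    · simp [hwE, hw_f_zero_of_nonpos α h]
    · exact Integrable.mul_const (hw_u_integrable hα h) (hardWallDensityFn α s)
  · have e : ∀ s : ℝ, ∫ u in Set.Ioi (0:ℝ), ‖hwE α (u, s)‖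
        = (Set.Ioo (0:ℝ) 1).indicator (fun _ => 1 / 2) s := by
      intro s
      have e1 : ∫ u in Set.Ioi (0:ℝ), ‖hwE α (u, s)‖ = ∫ u in Set.Ioi (0:ℝ), hwE α (u, s) := by
        refine setIntegral_congr_fun measurableSet_Ioi fun u hu => ?_
        have hu : 0 < u := hu
        have := hw_f_nonneg hα s
        refine Real.norm_of_nonneg ?_
        unfold hwE
        positivity
      rw [e1]
      rcases le_or_gt s 0 with h | h
      · simp [hwE, hw_f_zero_of_nonpos α h, h.not_gt]
      · simp only [hwE]
        rw [integral_mul_const, hw_upperGamma hα h le_rfl]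
        simp only [mul_zero, zero_mul]
        rw [hw_upperGamma_zero α hα]
        have h2 := hw_f_mul_rpow α s
        have hG := (Real.Gamma_pos_of_pos (s := α + 1) (by linarith)).ne'
        rw [show 1 / 2 * (s ^ (-(α + 1)) * Real.Gamma (α + 1)) * hardWallDensityFn α s
          = 1 / 2 * Real.Gamma (α + 1) * (s ^ (-(α + 1)) * hardWallDensityFn α s) by ring, h2]
        by_cases hs : s ∈ Set.Ioo (0:ℝ) 1
        · simp only [Set.indicator_of_mem hs]; field_simp
        · simp [Set.indicator_of_notMem hs]
    simp_rw [e]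
    rw [integrable_indicator_iff measurableSet_Ioo]
    exact integrableOn_const (by simp)

lemma hw_kernel_eq {x u : ℝ} (hu : u ≠ x) (t s : ℝ) :
    Real.exp (-((t + s) * (x + u))) * hwKer (x - u) (t - s)
      = Real.exp (-(t * (2 * x))) * Real.exp (-(2 * s * u)) *
        ((if s ≤ t then (1:ℝ) else 0) - (if x < u then (1:ℝ) else 0)) := by
  have e : Real.exp (-((t + s) * (x + u))) * Real.exp (-((t - s) * (x - u)))
      = Real.exp (-(t * (2 * x))) * Real.exp (-(2 * s * u)) := by
    rw [← Real.exp_add, ← Real.exp_add]; congr 1; ring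
  unfold hwKer
  rcases lt_or_gt_of_ne hu with h | h
  · rw [if_pos (sub_pos.2 h), if_neg h.le.not_gt]
    by_cases hst : s ≤ t
    · rw [if_pos (sub_nonneg.2 hst), if_pos hst, e]; ring
    · rw [if_neg (by linarith), if_neg hst]; ring
  · rw [if_neg (by linarith), if_pos h]
    by_cases hst : s ≤ t
    · rw [if_neg (by linarith), if_pos hst]; ring
    · rw [if_pos (by linarith), if_neg hst, mul_neg, e]; ring

lemma hw_triple {α : ℝ} (hα : -1 < α) {x : ℝ} (hx : 0 < x) :
    ∫ u in Set.Ioi (0:ℝ), (2 * u) ^ α * ∫ t, ∫ s, hardWallDensityFn α t * hardWallDensityFn α s *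
          Real.exp (-((t + s) * (x + u))) * hwKer (x - u) (t - s)
    = 1 / 2 * (∫ t in Set.Ioi (0 : ℝ), ∫ s in Set.Ioc (0 : ℝ) t,
        hardWallDensityFn α s * hardWallDensityFn α t * Real.exp (-(2 * x * t)) *
        s ^ (-(α + 1)) * Real.Gamma (α + 1))
      - 1 / 2 * (∫ s in Set.Ioi (0 : ℝ),
      hardWallDensityFn α s * s ^ (-(α + 1)) * upperGamma (α + 1) (2 * x * s)) *
        ∫ t, hardWallDensityFn α t * Real.exp (-(t * (2 * x))) := by
  have hfm := hw_f_measurable α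
  set ν : Measure (ℝ × ℝ) := (volume.restrict (Set.Ioi (0:ℝ))).prod volume with hν
  set g : ℝ → ℝ := fun t => hardWallDensityFn α t * Real.exp (-(t * (2 * x))) with hg
  have hgi : Integrable g := hw_h_integrable hα (by positivity)
  have hgm : Measurable g := by fun_prop
  have hEi : Integrable (hwE α) ν := hwE_integrable hα
  have hEm := hwE_measurable α
  set κ : ℝ → ℝ → ℝ → ℝ := fun u s t =>
    (if s ≤ t then (1:ℝ) else 0) - (if x < u then (1:ℝ) else 0) with hκ
  have hκb : ∀ u s t, ‖κ u s t‖ ≤ 1 := by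
    intro u s t; simp only [hκ]; split_ifs <;> simp
  have m1 : Measurable fun p : (ℝ × ℝ) × ℝ => (if p.1.2 ≤ p.2 then (1:ℝ) else 0) :=
    Measurable.ite (measurableSet_le (by fun_prop) (by fun_prop)) measurable_const measurable_const
  have m2 : Measurable fun u : ℝ => (if x < u then (1:ℝ) else 0) :=
    Measurable.ite measurableSet_Ioi measurable_const measurable_const
  have hκm : Measurable fun p : (ℝ × ℝ) × ℝ => κ p.1.1 p.1.2 p.2 :=
    m1.sub (m2.comp (by fun_prop))
  -- the triple integrand
  have hD : Integrable (fun p : (ℝ × ℝ) × ℝ => hwE α p.1 * g p.2) (ν.prod volume) :=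
    hEi.mul_prod hgi
  have hΨ : Integrable (fun p : (ℝ × ℝ) × ℝ => hwE α p.1 * g p.2 * κ p.1.1 p.1.2 p.2)
      (ν.prod volume) := by
    refine hD.mono (((hEm.comp measurable_fst).mul (hgm.comp measurable_snd)).mul
      hκm).aestronglyMeasurable (Filter.Eventually.of_forall fun p => ?_)
    rw [norm_mul _ (κ _ _ _)]
    exact mul_le_of_le_one_right (norm_nonneg _) (hκb _ _ _)
  have hΨ1 : Integrable (fun p : (ℝ × ℝ) × ℝ => hwE α p.1 * g p.2 * (if p.1.2 ≤ p.2 then (1:ℝ) else 0))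
      (ν.prod volume) := by
    refine hD.mono (((hEm.comp measurable_fst).mul (hgm.comp measurable_snd)).mul
      m1).aestronglyMeasurable (Filter.Eventually.of_forall fun p => ?_)
    rw [norm_mul _ (ite _ _ _)]
    refine mul_le_of_le_one_right (norm_nonneg _) ?_
    split_ifs <;> simp
  -- step 1: rewrite the left side
  have step1 : ∫ u in Set.Ioi (0:ℝ), (2 * u) ^ α * ∫ t, ∫ s, hardWallDensityFn α t *
      hardWallDensityFn α s * Real.exp (-((t + s) * (x + u))) * hwKer (x - u) (t - s)
      = ∫ u in Set.Ioi (0:ℝ), ∫ s, ∫ t, hwE α (u, s) * g t * κ u s t := by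
    have hae : ∀ᵐ u : ℝ, u ≠ x := by simp [ae_iff]
    refine setIntegral_congr_ae measurableSet_Ioi ?_
    filter_upwards [hae] with u hu hu0
    have hu0 : 0 < u := hu0
    rw [← integral_const_mul]
    simp_rw [← integral_const_mul]
    have e : ∀ t s : ℝ, (2 * u) ^ α * (hardWallDensityFn α t * hardWallDensityFn α s *
        Real.exp (-((t + s) * (x + u))) * hwKer (x - u) (t - s))
        = hwE α (u, s) * g t * κ u s t := by
      intro t s
      rw [mul_assoc (hardWallDensityFn α t * hardWallDensityFn α s), hw_kernel_eq hu]
      simp only [hwE, hg, hκ]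
      ring
    simp_rw [e]
    refine integral_integral_swap ?_
    have hEs : Integrable (fun s => hwE α (u, s)) := by
      have := ((hw_h_integrable hα (q := 2 * u) (by positivity)).const_mul ((2 * u) ^ α))
      refine this.congr (Filter.Eventually.of_forall fun s => ?_)
      simp only [hwE]
      rw [show 2 * s * u = s * (2 * u) by ring]; ring
    have hp : Integrable (fun p : ℝ × ℝ => g p.1 * hwE α (u, p.2)) := hgi.mul_prod hEs
    refine hp.mono ?_ (Filter.Eventually.of_forall fun p => ?_)
    · refine Measurable.aestronglyMeasurable ?_
      refine Measurable.mul ((hEm.comp (by fun_prop)).mul (hgm.comp (by fun_prop))) ?_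
      exact hκm.comp (f := fun p : ℝ × ℝ => (((u, p.2), p.1) : (ℝ × ℝ) × ℝ)) (by fun_prop)
    · simp only [Function.uncurry]
      rw [norm_mul _ (κ _ _ _), mul_comm (hwE _ _)]
      exact mul_le_of_le_one_right (norm_nonneg _) (hκb _ _ _)
  have step2 : ∫ u in Set.Ioi (0:ℝ), ∫ s, ∫ t, hwE α (u, s) * g t * κ u s t
      = ∫ p, hwE α p.1 * g p.2 * κ p.1.1 p.1.2 p.2 ∂(ν.prod volume) := by
    rw [integral_prod _ hΨ, integral_prod _ hΨ.integral_prod_left]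
  -- slices
  have hE1 : ∀ t, Integrable (fun p : ℝ × ℝ => hwE α p * (if p.2 ≤ t then (1:ℝ) else 0)) ν := by
    intro t
    refine hEi.mono (hEm.mul (m1.comp (f := fun p : ℝ × ℝ => (p, t)) (by fun_prop))).aestronglyMeasurable
      (Filter.Eventually.of_forall fun p => ?_)
    rw [norm_mul]
    refine mul_le_of_le_one_right (norm_nonneg _) ?_
    split_ifs <;> simp
  have hE2 : Integrable (fun p : ℝ × ℝ => hwE α p * (if x < p.1 then (1:ℝ) else 0)) ν := by
    refine hEi.mono (hEm.mul (m2.comp measurable_fst)).aestronglyMeasurable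
      (Filter.Eventually.of_forall fun p => ?_)
    rw [norm_mul]
    refine mul_le_of_le_one_right (norm_nonneg _) ?_
    split_ifs <;> simp
  have step3 : ∫ p, hwE α p.1 * g p.2 * κ p.1.1 p.1.2 p.2 ∂(ν.prod volume)
      = ∫ t, (g t * (∫ p, hwE α p * (if p.2 ≤ t then (1:ℝ) else 0) ∂ν)
        - g t * ∫ p, hwE α p * (if x < p.1 then (1:ℝ) else 0) ∂ν) := by
    rw [integral_prod_symm _ hΨ]
    congr 1; ext t
    rw [← mul_sub, ← integral_sub (hE1 t) hE2, ← integral_const_mul]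
    congr 1; ext p
    simp only [hκ]
    ring
  have hgP : Integrable (fun t => g t * (∫ p, hwE α p * (if p.2 ≤ t then (1:ℝ) else 0) ∂ν)) := by
    refine hΨ1.integral_prod_right.congr (Filter.Eventually.of_forall fun t => ?_)
    simp only
    rw [← integral_const_mul]
    congr 1; ext p
    ring
  rw [step1, step2, step3, integral_sub hgP (hgi.mul_const _), integral_mul_const]
  congr 1
  · have hI : ∀ t, ∫ p, hwE α p * (if p.2 ≤ t then (1:ℝ) else 0) ∂ν
        = 1 / 2 * ∫ s in Set.Ioc 0 t, hardWallDensityFn α s * s ^ (-(α + 1)) * Real.Gamma (α + 1) := by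
      intro t
      rw [integral_prod_symm _ (hE1 t), ← integral_indicator measurableSet_Ioc, ← integral_const_mul]
      congr 1; ext s
      rcases le_or_gt s 0 with h | h
      · simp [hwE, hw_f_zero_of_nonpos α h, h.not_gt]
      · by_cases hst : s ≤ t
        · simp only [hst, if_true, mul_one, hwE]
          rw [integral_mul_const, hw_upperGamma hα h le_rfl, mul_zero, zero_mul,
            hw_upperGamma_zero α hα, Set.indicator_of_mem (Set.mem_Ioc.2 ⟨h, hst⟩)]
          ring
        · simp [hst]
    rw [hw_setIntegral_Ioi, ← integral_const_mul]
    · congr 1; ext t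
      rw [hI, mul_left_comm, ← integral_const_mul]
      congr 2; ext s
      simp only [hg]
      rw [show 2 * x * t = t * (2 * x) by ring]
      ring
    · intro t ht
      simp [hw_f_zero_of_nonpos α ht]
  · rw [mul_comm]
    congr 1
    rw [integral_prod_symm _ hE2, hw_setIntegral_Ioi, ← integral_const_mul]
    · congr 1; ext s
      rcases le_or_gt s 0 with h | h
      · simp [hwE, hw_f_zero_of_nonpos α h]
      · have e : ∫ u in Set.Ioi (0:ℝ), hwE α (u, s) * (if x < u then (1:ℝ) else 0)
            = ∫ u in Set.Ioi x, hwE α (u, s) := by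
          rw [← integral_indicator measurableSet_Ioi, ← integral_indicator measurableSet_Ioi]
          congr 1; ext u
          by_cases hu : x < u
          · simp [hu, hx.trans hu]
          · simp [hu]
        rw [e]
        simp only [hwE]
        rw [integral_mul_const, hw_upperGamma hα h hx.le]
        ring
    · intro s hs
      simp [hw_f_zero_of_nonpos α hs]

lemma hw_abs_integrable (a b : ℝ) :
    IntegrableOn (fun t : ℝ => |t| ^ (-(1 / 2) : ℝ)) (Set.Icc a b) := by
  have h1 : IntegrableOn (fun t : ℝ => t ^ (-(1 / 2) : ℝ)) (Set.Icc (-(|a| + |b|)) (|a| + |b|)) := by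
    rw [← intervalIntegrable_iff_integrableOn_Icc_of_le (by linarith [abs_nonneg a, abs_nonneg b])]
    exact intervalIntegral.intervalIntegrable_rpow' (by norm_num)
  have h2 : IntegrableOn (fun t : ℝ => (-t) ^ (-(1 / 2) : ℝ))
      (Set.Icc (-(|a| + |b|)) (|a| + |b|)) := by
    rw [← intervalIntegrable_iff_integrableOn_Icc_of_le (by linarith [abs_nonneg a, abs_nonneg b])]
    have h := intervalIntegral.intervalIntegrable_rpow' (r := (-(1 / 2) : ℝ)) (a := (|a| + |b|))
      (b := -(|a| + |b|)) (by norm_num)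
    have := h.comp_sub_left 0
    simpa using this
  have hs : Set.Icc a b ⊆ Set.Icc (-(|a| + |b|)) (|a| + |b|) := by
    intro t ht
    constructor
    · linarith [ht.1, neg_abs_le a, abs_nonneg b]
    · linarith [ht.2, le_abs_self b, abs_nonneg a]
  have h1' := h1.mono_set hs
  have h2' := h2.mono_set hs
  have h3 := (Integrable.norm h1').add (Integrable.norm h2')
  refine Integrable.mono' h3 ?_ (Filter.Eventually.of_forall fun t => ?_)
  · exact Measurable.aestronglyMeasurable (by fun_prop)
  · simp only [Pi.add_apply]
    rw [Real.norm_of_nonneg (by positivity)]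
    rcases le_total 0 t with h | h
    · rw [abs_of_nonneg h]
      linarith [le_abs_self (t ^ (-(1 / 2) : ℝ)), norm_nonneg ((-t) ^ (-(1 / 2) : ℝ)),
        Real.norm_eq_abs (t ^ (-(1 / 2) : ℝ))]
    · rw [abs_of_nonpos h]
      linarith [le_abs_self ((-t) ^ (-(1 / 2) : ℝ)), norm_nonneg (t ^ (-(1 / 2) : ℝ)),
        Real.norm_eq_abs ((-t) ^ (-(1 / 2) : ℝ))]

lemma hw_abs_le_of {c t : ℝ} (hc : 0 < c) (ht : c ≤ |t|) :
    |t| ^ (-(1 / 2) : ℝ) ≤ c ^ (-(1 / 2) : ℝ) :=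
  Real.rpow_le_rpow_of_nonpos hc ht (by norm_num)

lemma hw_psi_integrable {x : ℝ} (hx : 0 < x) :
    Integrable (fun η : ℝ => (x ^ 2 + η ^ 2)⁻¹ * |η| ^ (-(1 / 2) : ℝ)) := by
  have hm : Measurable (fun η : ℝ => (x ^ 2 + η ^ 2)⁻¹ * |η| ^ (-(1 / 2) : ℝ)) := by fun_prop
  rw [← integrableOn_univ, ← Set.union_compl_self (Set.Icc (-1:ℝ) 1), integrableOn_union]
  constructor
  · refine (hw_abs_integrable _ _).continuousOn_mul ?_ isCompact_Icc
    refine Continuous.continuousOn ?_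
    refine Continuous.inv₀ (by fun_prop) fun η => by positivity
  · refine Integrable.mono' (hw_integrable_inv hx.ne').integrableOn hm.aestronglyMeasurable ?_
    filter_upwards [ae_restrict_mem measurableSet_Icc.compl] with η hη
    rw [Real.norm_of_nonneg (by positivity)]
    refine mul_le_of_le_one_right (by positivity) ?_
    have : (1:ℝ) ≤ |η| := by
      by_contra hcon
      push Not at hcon
      exact hη ⟨(abs_lt.1 hcon).1.le, (abs_lt.1 hcon).2.le⟩
    simpa using hw_abs_le_of one_pos this

lemma hw_phi0_integrable {α : ℝ} (hα : -1 < α) {x : ℝ} (hx : 0 < x) :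
    IntegrableOn (fun u : ℝ => (2 * u) ^ α * (x + u) ^ (-(2 * (α + 1)))) (Set.Ioi 0) := by
  have hm : Measurable (fun u : ℝ => (2 * u) ^ α * (x + u) ^ (-(2 * (α + 1)))) := by fun_prop
  rw [← Set.Ioc_union_Ioi_eq_Ioi zero_le_one, integrableOn_union]
  constructor
  · have h0 : IntegrableOn (fun u : ℝ => u ^ α) (Set.Icc 0 1) := by
      rw [← intervalIntegrable_iff_integrableOn_Icc_of_le zero_le_one]
      exact intervalIntegral.intervalIntegrable_rpow' hα
    have h1 : IntegrableOn (fun u : ℝ => 2 ^ α * u ^ α) (Set.Icc 0 1) := h0.const_mul _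
    have h2 := h1.mul_continuousOn (g' := fun u : ℝ => (x + u) ^ (-(2 * (α + 1)))) (by
      refine ContinuousOn.rpow_const (by fun_prop) fun u hu => Or.inl ?_
      have := hu.1
      positivity) isCompact_Icc
    refine (h2.mono_set Set.Ioc_subset_Icc_self).congr_fun (fun u hu => ?_) measurableSet_Ioc
    simp only
    rw [Real.mul_rpow (by norm_num) hu.1.le]
  · have h := (integrableOn_Ioi_rpow_of_lt (a := -α - 2) (by linarith) one_pos).const_mul (2 ^ α)
    refine Integrable.mono' h hm.aestronglyMeasurable ?_
    filter_upwards [ae_restrict_mem measurableSet_Ioi] with u hu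
    have hu1 : (1:ℝ) < u := hu
    have hu0 : 0 < u := by linarith
    rw [Real.norm_of_nonneg (by positivity), Real.mul_rpow (by norm_num) hu0.le, mul_assoc]
    refine mul_le_mul_of_nonneg_left ?_ (by positivity)
    rw [show -α - 2 = α + -(2 * (α + 1)) by ring, Real.rpow_add hu0]
    refine mul_le_mul_of_nonneg_left ?_ (by positivity)
    exact Real.rpow_le_rpow_of_nonpos hu0 (by linarith) (by linarith)

lemma hw_phi_integrable {α : ℝ} (hα : -1 < α) {x : ℝ} (hx : 0 < x) :
    IntegrableOn (fun u : ℝ => (2 * u) ^ α * (x + u) ^ (-(2 * (α + 1))) * |x - u| ^ (-(1 / 2) : ℝ))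
      (Set.Ioi 0) := by
  have hm : Measurable (fun u : ℝ =>
    (2 * u) ^ α * (x + u) ^ (-(2 * (α + 1))) * |x - u| ^ (-(1 / 2) : ℝ)) := by fun_prop
  have hA : IntegrableOn (fun u : ℝ => (2 * u) ^ α * (x + u) ^ (-(2 * (α + 1))) *
      |x - u| ^ (-(1 / 2) : ℝ)) (Set.Icc (x / 2) (3 * x / 2)) := by
    refine IntegrableOn.continuousOn_mul ?_ ?_ isCompact_Icc
    · refine ContinuousOn.mul (ContinuousOn.rpow_const (by fun_prop) fun u hu => Or.inl ?_)
        (ContinuousOn.rpow_const (by fun_prop) fun u hu => Or.inl ?_)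
      · linarith [hu.1]
      · linarith [hu.1]
    · have h := hw_abs_integrable (-(x / 2)) (x / 2)
      rw [← intervalIntegrable_iff_integrableOn_Icc_of_le (by linarith)] at h ⊢
      have h2 := h.comp_sub_left x
      rw [show x - x / 2 = x / 2 by ring, show x - -(x / 2) = 3 * x / 2 by ring] at h2
      exact h2.symm
  have hB : IntegrableOn (fun u : ℝ => (2 * u) ^ α * (x + u) ^ (-(2 * (α + 1))) *
      |x - u| ^ (-(1 / 2) : ℝ)) (Set.Ioi 0 \ Set.Icc (x / 2) (3 * x / 2)) := by
    have h := ((hw_phi0_integrable hα hx).mono_set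
      (Set.sdiff_subset (t := Set.Icc (x / 2) (3 * x / 2)))).mul_const ((x / 2) ^ (-(1 / 2) : ℝ))
    refine Integrable.mono' h hm.aestronglyMeasurable ?_
    filter_upwards [ae_restrict_mem (measurableSet_Ioi.diff measurableSet_Icc)] with u hu
    have hu0 : 0 < u := hu.1
    rw [Real.norm_of_nonneg (by positivity)]
    refine mul_le_mul_of_nonneg_left (hw_abs_le_of (by positivity) ?_) (by positivity)
    by_contra hcon
    push Not at hcon
    refine hu.2 ⟨?_, ?_⟩ <;> linarith [(abs_lt.1 hcon).1, (abs_lt.1 hcon).2]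
  refine (hA.union hB).mono_set fun u hu => ?_
  by_cases h : u ∈ Set.Icc (x / 2) (3 * x / 2)
  · exact Or.inl h
  · exact Or.inr ⟨hu, h⟩

/-- The integrand in the coordinates `w = u + i(y - η)`. -/
noncomputable def hwPhi (α x : ℝ) (p : ℝ × ℝ) : ℂ :=
  (((2 * p.1) ^ α : ℝ) : ℂ) * (((‖hwI α (((x + p.1 : ℝ) : ℂ) + I * (p.2 : ℂ))‖ ^ 2 : ℝ) : ℂ) *
    (1 / (((x - p.1 : ℝ) : ℂ) + I * (p.2 : ℂ))))

lemma hwPhi_measurable (α x : ℝ) : Measurable (hwPhi α x) := by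
  have h : Measurable (hwI α) := (hw_I_stronglyMeasurable α).measurable
  unfold hwPhi
  fun_prop

lemma hw_inv_norm_le {a η : ℝ} (ha : a ≠ 0) (hη : η ≠ 0) :
    ‖(a : ℂ) + I * (η : ℂ)‖⁻¹ ≤ |a| ^ (-(1 / 2) : ℝ) * |η| ^ (-(1 / 2) : ℝ) := by
  have ha' := abs_pos.2 ha
  have hη' := abs_pos.2 hη
  rw [Real.rpow_neg ha'.le, Real.rpow_neg hη'.le, ← mul_inv, ← Real.mul_rpow ha'.le hη'.le,
    ← Real.sqrt_eq_rpow]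
  refine inv_anti₀ (by positivity) ?_
  rw [Real.sqrt_le_left (norm_nonneg _), hw_norm_sq, ← sq_abs a, ← sq_abs η]
  nlinarith [sq_nonneg (|a| - |η|)]

lemma hwPhi_integrable {α : ℝ} (hα : -1 < α) {x : ℝ} (hx : 0 < x) :
    Integrable (hwPhi α x) ((volume.restrict (Set.Ioi (0:ℝ))).prod volume) := by
  have hdom := ((hw_phi_integrable hα hx).mul_prod (hw_psi_integrable hx)).const_mul
    ((2 * (α + 1)) ^ 2)
  refine hdom.mono' (hwPhi_measurable α x).aestronglyMeasurable ?_
  have a1 : ∀ᵐ u : ℝ ∂(volume.restrict (Set.Ioi (0:ℝ))), 0 < u ∧ u ≠ x := by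
    have hae : ∀ᵐ u : ℝ, u ≠ x := by simp [ae_iff]
    filter_upwards [ae_restrict_mem measurableSet_Ioi, ae_restrict_of_ae hae] with u h1 h2
    exact ⟨h1, h2⟩
  have a2 : ∀ᵐ η : ℝ, η ≠ 0 := by simp [ae_iff]
  filter_upwards [Measure.quasiMeasurePreserving_fst.ae a1,
    Measure.quasiMeasurePreserving_snd.ae a2] with p hp1 hp2
  obtain ⟨u, η⟩ := p
  obtain ⟨hu0, hux⟩ := hp1
  simp only at hu0 hux hp2
  have hα1 : 0 < α + 1 := by linarith
  have hxu : 0 < x + u := by linarith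
  have hb := hw_I_bound hα (p := ((x + u : ℝ) : ℂ) + I * (η : ℂ)) (by simpa using hxu)
  have hre : (((x + u : ℝ) : ℂ) + I * (η : ℂ)).re = x + u := by simp
  rw [hre] at hb
  have hb2 := pow_le_pow_left₀ (norm_nonneg _) hb 2
  have hc := hw_inv_norm_le (sub_ne_zero.2 hux.symm) hp2
  simp only [hwPhi]
  rw [norm_mul, norm_mul, Complex.norm_real, Complex.norm_real, norm_div, norm_one, one_div,
    Real.norm_of_nonneg (Real.rpow_nonneg (by positivity) _), Real.norm_of_nonneg (sq_nonneg _)]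
  have hb3 : ‖hwI α (((x + u : ℝ) : ℂ) + I * (η : ℂ))‖ ^ 2
      ≤ (2 * (α + 1)) ^ 2 * (x + u) ^ (-(2 * (α + 1))) * (x ^ 2 + η ^ 2)⁻¹ := by
    refine hb2.trans ?_
    rw [mul_pow, mul_pow, inv_pow, hw_norm_sq, ← Real.rpow_natCast ((x + u) ^ _), ← Real.rpow_mul hxu.le,
      show -(α + 1) * ((2 : ℕ) : ℝ) = -(2 * (α + 1)) by push_cast; ring]
    refine mul_le_mul_of_nonneg_left ?_ (by positivity)
    refine inv_anti₀ (by positivity) ?_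
    nlinarith
  calc (2 * u) ^ α * (‖hwI α (((x + u : ℝ) : ℂ) + I * (η : ℂ))‖ ^ 2 *
        ‖((x - u : ℝ) : ℂ) + I * (η : ℂ)‖⁻¹)
      ≤ (2 * u) ^ α * (((2 * (α + 1)) ^ 2 * (x + u) ^ (-(2 * (α + 1))) * (x ^ 2 + η ^ 2)⁻¹) *
        (|x - u| ^ (-(1 / 2) : ℝ) * |η| ^ (-(1 / 2) : ℝ))) := by
        refine mul_le_mul_of_nonneg_left ?_ (by positivity)
        exact mul_le_mul hb3 hc (by positivity) (by positivity)
    _ = _ := by ring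

lemma hw_K_diag (α : ℝ) {z : ℂ} (hz : 0 < z.re) : hardWallK α z z =
    (((2 * z.re) ^ α * ∫ t, hardWallDensityFn α t * Real.exp (-(t * (2 * z.re))) : ℝ) : ℂ) := by
  unfold hardWallK
  rw [hw_setIntegral_Ioi _ (fun s hs => by simp [hw_f_zero_of_nonpos α hs]),
    ← Real.rpow_add (by positivity), add_halves, Complex.ofReal_mul _ (∫ t, _),
    ← integral_complex_ofReal]
  congr 1
  congr 1; ext t
  push_cast
  rw [Complex.add_conj]
  push_cast
  congr 2; ring

lemma hw_g_pos {α : ℝ} (hα : -1 < α) {q : ℝ} (hq : 0 < q) :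
    0 < ∫ t, hardWallDensityFn α t * Real.exp (-(t * q)) := by
  rw [integral_pos_iff_support_of_nonneg
    (fun t => mul_nonneg (hw_f_nonneg hα t) (Real.exp_pos _).le) (hw_h_integrable hα hq)]
  have : Set.Ioo (0:ℝ) 1 ⊆ Function.support (fun t => hardWallDensityFn α t * Real.exp (-(t * q))) := by
    intro t ht
    have hG := Real.Gamma_pos_of_pos (s := α + 1) (by linarith)
    have := Real.rpow_pos_of_pos ht.1 (α + 1)
    simp only [Function.mem_support, hardWallDensityFn, ht, if_true]
    positivity
  refine lt_of_lt_of_le ?_ (measure_mono this)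
  simp

lemma hw_RC {α : ℝ} (hα : -1 < α) {z : ℂ} (hz : 0 < z.re) :
    ∫ w in {w : ℂ | 0 < w.re}, ((‖hardWallK α z w‖ ^ 2 : ℝ) : ℂ) * (1 / (z - w))
      = (((2 * z.re) ^ α : ℝ) : ℂ) *
        ∫ p, hwPhi α z.re p ∂((volume.restrict (Set.Ioi (0:ℝ))).prod volume) := by
  have hmp : MeasurePreserving (fun p : ℝ × ℝ => (p.1, z.im - p.2))
      ((volume.restrict (Set.Ioi (0:ℝ))).prod volume)
      ((volume.restrict (Set.Ioi (0:ℝ))).prod volume) :=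
    (MeasurePreserving.id _).prod (Measure.measurePreserving_sub_left volume z.im)
  have hem : MeasurableEmbedding (fun p : ℝ × ℝ => (p.1, z.im - p.2)) :=
    ((MeasurableEquiv.refl ℝ).prodCongr (MeasurableEquiv.subLeft z.im)).measurableEmbedding
  rw [← hmp.integral_comp hem]
  rw [← (Complex.volume_preserving_equiv_real_prod.symm).setIntegral_preimage_emb
    Complex.measurableEquivRealProd.symm.measurableEmbedding]
  have hset : Complex.measurableEquivRealProd.symm ⁻¹' {w : ℂ | 0 < w.re}
      = Set.Ioi (0:ℝ) ×ˢ (Set.univ : Set ℝ) := by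
    ext p; simp [Complex.measurableEquivRealProd_symm_apply]
  rw [hset, Measure.volume_eq_prod, ← Measure.prod_restrict, Measure.restrict_univ,
    ← integral_const_mul]
  have a1 : ∀ᵐ u : ℝ ∂(volume.restrict (Set.Ioi (0:ℝ))), 0 < u := ae_restrict_mem measurableSet_Ioi
  refine integral_congr_ae ?_
  filter_upwards [Measure.quasiMeasurePreserving_fst.ae a1] with p hp
  obtain ⟨u, v⟩ := p
  simp only at hp
  have e0 : Complex.measurableEquivRealProd.symm (u, v) = (u : ℂ) + I * (v : ℂ) := by
    apply Complex.ext <;> simp [Complex.measurableEquivRealProd_symm_apply]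
  have eK : hardWallK α z ((u : ℂ) + I * (v : ℂ)) =
      (((2 * z.re) ^ (α / 2) * (2 * u) ^ (α / 2) : ℝ) : ℂ) *
        hwI α (((z.re + u : ℝ) : ℂ) + I * ((z.im - v : ℝ) : ℂ)) := by
    have e1 : z + (starRingEnd ℂ) ((u : ℂ) + I * (v : ℂ))
        = ((z.re + u : ℝ) : ℂ) + I * ((z.im - v : ℝ) : ℂ) := by
      apply Complex.ext <;> simp [sub_eq_add_neg]
    have e2 : ((u : ℂ) + I * (v : ℂ)).re = u := by simp
    rw [hardWallK, e1, e2, hwI]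
  have eD : z - ((u : ℂ) + I * (v : ℂ)) = ((z.re - u : ℝ) : ℂ) + I * ((z.im - v : ℝ) : ℂ) := by
    apply Complex.ext <;> simp
  have hpw : ∀ y : ℝ, 0 < y → (y ^ (α / 2)) ^ 2 = y ^ α := by
    intro y hy
    rw [← Real.rpow_natCast, ← Real.rpow_mul hy.le]; congr 1; push_cast; ring
  simp only [e0, eK, eD, hwPhi]
  rw [norm_mul, mul_pow, Complex.norm_real, Real.norm_eq_abs, sq_abs, mul_pow, hpw _ (by positivity),
    hpw _ (by positivity)]
  push_cast
  ring

/-- The decomposition `R(z) C(z) = -L₁(z) + L₂(z)` of the Cauchy transform of the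
    hard-wall Berezin kernel. -/
theorem hardWall_cauchy_decomposition (α : ℝ) (hα : -1 < α) (z : ℂ) (hz : 0 < z.re) :
    hardWallK α z z * hardWallCauchy α z = -hardWallL1 α z + hardWallL2 α z := by
  have hR : hardWallK α z z ≠ 0 := by
    rw [hw_K_diag α hz]
    have := hw_g_pos hα (q := 2 * z.re) (by positivity)
    exact_mod_cast (mul_pos (Real.rpow_pos_of_pos (by positivity) _) this).ne'
  have e1 : hardWallK α z z * hardWallCauchy α z = (1 / (Real.pi : ℂ)) *
      ∫ w in {w : ℂ | 0 < w.re}, ((‖hardWallK α z w‖ ^ 2 : ℝ) : ℂ) * (1 / (z - w)) := by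
    rw [hardWallCauchy, mul_left_comm, ← integral_const_mul]
    congr 2; ext w
    field_simp
  have e2 : ∫ p, hwPhi α z.re p ∂((volume.restrict (Set.Ioi (0:ℝ))).prod volume)
      = ((2 * Real.pi * ∫ u in Set.Ioi (0:ℝ), (2 * u) ^ α * ∫ t, ∫ s, hardWallDensityFn α t *
        hardWallDensityFn α s * Real.exp (-((t + s) * (z.re + u))) *
        hwKer (z.re - u) (t - s) : ℝ) : ℂ) := by
    rw [integral_prod _ (hwPhi_integrable hα hz), ← integral_const_mul, ← integral_complex_ofReal]
    have hae : ∀ᵐ u : ℝ, u ≠ z.re := by simp [ae_iff]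
    refine setIntegral_congr_ae measurableSet_Ioi ?_
    filter_upwards [hae] with u hu hu0
    have hu0 : 0 < u := hu0
    simp only [hwPhi]
    rw [integral_const_mul, hw_V hα (by positivity) (sub_ne_zero.2 hu.symm), ← Complex.ofReal_mul]
    congr 1
    ring
  rw [e1, hw_RC hα hz, e2, hw_triple hα hz, hardWallL1, hardWallL2, hw_K_diag α hz]
  have hpi : (Real.pi : ℂ) ≠ 0 := by exact_mod_cast Real.pi_ne_zero
  generalize (∫ t in Set.Ioi (0 : ℝ), ∫ s in Set.Ioc (0 : ℝ) t,
      hardWallDensityFn α s * hardWallDensityFn α t * Real.exp (-(2 * z.re * t)) *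
        s ^ (-(α + 1)) * Real.Gamma (α + 1)) = A
  generalize (∫ s in Set.Ioi (0 : ℝ),
      hardWallDensityFn α s * s ^ (-(α + 1)) * upperGamma (α + 1) (2 * z.re * s)) = B
  generalize (∫ t, hardWallDensityFn α t * Real.exp (-(t * (2 * z.re)))) = D
  generalize (2 * z.re) ^ α = E
  push_cast
  field_simp
  ring
end
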